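/- arXiv:1510.01605 — 3 statements merged into one kernel-verified Lean document; each statement's English description precedes it below -/
import Mathlib

section
/- Let k ≥ 1 and let (X,T) be a ℤ^k-system with the marker property and mdim(X) = 0. Then X has the small boundary property: for every point x ∈ X and every open set U containing x, there exists an open set V with x ∈ V ⊆ U and ocap(∂V) = 0. -/
/-!
The set `V` is `{y | 0 < g y}` for a generic continuous function `g` close to
`y ↦ ρ / 2 - dist y x`. Its boundary lies in the zero set of `g`, so it suffices that the zero
set of a generic `g` has orbit capacity zero. By the Baire category theorem in `C(X, ℝ)` this
follows once, for each `η > 0`, the functions vanishing on a proportion at most `η` of some block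
`[M]` of every orbit form an open (`isOpen_fewZeros`) and dense (`exists_perturbation`) set.

For density, let `f` be continuous. Since `mdim X = 0`, for some `N` there is an `ε`-embedding of
`(X, d_[N])` into a complex of dimension at most `ζ N^k`. The functions `f ∘ T^a`, `a ∈ [N]`,
nearly factor through it, hence are approximated by a `C¹` map of the embedding; subtracting a
generic constant vector (its image under coordinate projections avoids the images of the
complex, by Hausdorff dimension) yields functions `G_a` close to `f ∘ T^a` such that at most
`ζ N^k` of them vanish at any point (`exists_block_functions`).

These are glued along orbits. The marker property gives, on every orbit, a continuously varying
power diagram whose centres are visits to a marker set and are mutually far apart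
(`exists_weights`). Each cell is cut into `N`-blocks aligned with its centre, the values `G_a` are
used on each block, and the results are averaged with smoothed cell weights. A site in one cell
only takes a value `G_a` at the base point of its block, so the zeros are controlled by the
number of blocks meeting a cell and the number of sites in more than one smoothed cell. Both are
bounded by `card_pairs_le`: contracting the cells slightly towards their centres makes even their
`N`-neighbourhoods disjoint, so that the total size of these neighbourhoods in `[M]` is at most
`(1 + ζ) M^k`.
-/

open Set Filter
open scoped NNReal ENNReal Topology

/-- A continuous action of `ℤ^k` on a topological space. -/
structure IsZkAction {k : ℕ} {X : Type*} [TopologicalSpace X]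
    (T : (Fin k → ℤ) → X → X) : Prop where
  cont : ∀ n, Continuous (T n)
  map_zero : ∀ x, T 0 x = x
  map_add : ∀ m n x, T (m + n) x = T m (T n x)

/-- The marker property for a `ℤ^k`-action. -/
def MarkerProperty {k : ℕ} {X : Type*} [TopologicalSpace X]
    (T : (Fin k → ℤ) → X → X) : Prop :=
  ∀ F : Finset (Fin k → ℤ), ∃ U : Set X, IsOpen U ∧
    (⋃ n : Fin k → ℤ, T n '' U) = Set.univ ∧
    ∀ n ∈ F, n ≠ 0 → U ∩ T n '' U = ∅

/-- `f` is an `ε`-embedding with respect to the (pseudo-)distance `ρ`: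
every fiber of `f` has `ρ`-diameter `< ε`. -/
def IsEpsEmbedding {X Y : Type*} [TopologicalSpace X] [TopologicalSpace Y]
    (ρ : X → X → ℝ) (ε : ℝ) (f : X → Y) : Prop :=
  Continuous f ∧ ∀ x y, f x = f y → ρ x y < ε

/-- `widim_ε(X, ρ)`: the least `n` such that there is an `ε`-embedding of `X`
into a finite simplicial complex of dimension at most `n`. -/
noncomputable def widim (X : Type*) [TopologicalSpace X] (ρ : X → X → ℝ) (ε : ℝ) : ℕ :=
  sInf {n : ℕ | ∃ (m : ℕ) (P : Geometry.SimplicialComplex ℝ (EuclideanSpace ℝ (Fin m))),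
    P.faces.Finite ∧ (∀ s ∈ P.faces, s.card ≤ n + 1) ∧
    ∃ f : X → P.space, IsEpsEmbedding ρ ε f}

/-- The distance `ρ_{[N]}(x,y) = sup_{a ∈ {0,…,N-1}^k} ρ(T^a x, T^a y)`. -/
noncomputable def blockRho {k : ℕ} {X : Type*} (T : (Fin k → ℤ) → X → X)
    (ρ : X → X → ℝ) (N : ℕ) (x y : X) : ℝ :=
  ⨆ a : Fin k → Fin N, ρ (T (fun i => (a i : ℤ)) x) (T (fun i => (a i : ℤ)) y)

/-- Mean dimension of a `ℤ^k`-system: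
`mdim(X) = lim_{ε→0} lim_{N→∞} widim_ε(X, d_{[N]})/N^k`, where the limit in `N`
equals the infimum (subadditivity) and the limit in `ε` equals the supremum
(monotonicity). -/
noncomputable def mdim {k : ℕ} (X : Type*) [MetricSpace X]
    (T : (Fin k → ℤ) → X → X) : ℝ≥0∞ :=
  ⨆ (ε : ℝ) (_ : 0 < ε), ⨅ (N : ℕ) (_ : 1 ≤ N),
    (widim X (blockRho T dist N) ε : ℝ≥0∞) / (N : ℝ≥0∞) ^ k

/-- Orbit capacity `ocap(A) = lim_{N→∞} N^{-k} sup_{x∈X} Σ_{n∈[N]} 1_A(T^n x)`;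
by subadditivity the limit equals the infimum over `N ≥ 1`. -/
noncomputable def ocap {k : ℕ} {X : Type*} (T : (Fin k → ℤ) → X → X) (A : Set X) : ℝ :=
  ⨅ N : {N : ℕ // 1 ≤ N},
    (⨆ x : X, ∑ a : Fin k → Fin N.1,
      A.indicator (fun _ => (1 : ℝ)) (T (fun i => (a i : ℤ)) x)) / (N.1 : ℝ) ^ k

/-! ### General position and mean dimension zero -/

/-- Any finite family of continuous functions that nearly factor through `F : X → E` is
approximated by a `C¹` map composed with `F`. -/
lemma exists_contDiff_approx {X ι : Type*} [TopologicalSpace X] [CompactSpace X] [Fintype ι]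
    {m : ℕ} (F : X → EuclideanSpace ℝ (Fin m)) (hF : Continuous F)
    (φ : ι → X → ℝ) (hφ : ∀ i, Continuous (φ i)) {τ : ℝ} (hτ : 0 < τ)
    (hfib : ∀ x y, F x = F y → ∀ i, |φ i x - φ i y| < τ) :
    ∃ h : EuclideanSpace ℝ (Fin m) → ι → ℝ, ContDiff ℝ 1 h ∧
      ∀ y i, |h (F y) i - φ i y| < τ := by
  let t : EuclideanSpace ℝ (Fin m) → Set (ι → ℝ) :=
    fun p => {v | ∀ y, F y = p → ∀ i, |v i - φ i y| < τ}
  have ht : ∀ p, Convex ℝ (t p) := by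
    intro p
    have : t p = ⋂ y, ⋂ (_ : F y = p), Metric.ball (fun i => φ i y) τ := by
      ext v
      simp only [t, mem_ofPred_eq, mem_iInter, Metric.mem_ball, dist_pi_lt_iff hτ, Real.dist_eq]
    rw [this]
    exact convex_iInter fun y => convex_iInter fun _ => convex_ball _ _
  have hloc : ∀ p, ∃ c : ι → ℝ, ∀ᶠ q in 𝓝 p, c ∈ t q := by
    intro p
    have hclosed : IsClosedMap F := hF.isClosedMap
    -- a neighbourhood of the fibre over `p` contains all fibres over nearby points
    have key : ∀ c : ι → ℝ, (∀ y, F y = p → ∀ i, |c i - φ i y| < τ) → ∀ᶠ q in 𝓝 p, c ∈ t q := by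
      intro c hc
      let O : Set X := {y | ∀ i, |c i - φ i y| < τ}
      have hO : IsOpen O := by
        have : O = ⋂ i, {y | |c i - φ i y| < τ} := by ext; simp [O]
        rw [this]
        exact isOpen_iInter_of_finite fun i =>
          isOpen_lt ((continuous_const.sub (hφ i)).abs) continuous_const
      have hcl : IsClosed (F '' Oᶜ) := hclosed _ hO.isClosed_compl
      have hp : p ∈ (F '' Oᶜ)ᶜ := by
        rintro ⟨y, hy, hyp⟩
        exact hy (hc y hyp)
      filter_upwards [hcl.isOpen_compl.mem_nhds hp] with q hq y hy
      by_contra hcon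
      exact hq ⟨y, hcon, hy⟩
    by_cases hp : ∃ y, F y = p
    · obtain ⟨y, hy⟩ := hp
      exact ⟨fun i => φ i y, key _ fun z hz i => hfib y z (hy.trans hz.symm) i⟩
    · exact ⟨0, key _ fun y hy => (hp ⟨y, hy⟩).elim⟩
  obtain ⟨g, hg⟩ := exists_contMDiffMap_forall_mem_convex_of_local_const
    (n := 1) (modelWithCornersSelf ℝ (EuclideanSpace ℝ (Fin m))) ht hloc
  exact ⟨g, g.contMDiff.contDiff, fun y i => hg (F y) y rfl i⟩

/-- A finite complex with simplices of at most `n + 1` vertices has Hausdorff dimension at most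
`n`. -/
lemma dimH_space_le {m n : ℕ} (P : Geometry.SimplicialComplex ℝ (EuclideanSpace ℝ (Fin m)))
    (hfin : P.faces.Finite) (hcard : ∀ s ∈ P.faces, s.card ≤ n + 1) : dimH P.space ≤ n := by
  classical
  unfold Geometry.SimplicialComplex.space
  rw [dimH_bUnion hfin.countable]
  refine iSup₂_le fun s hs => ?_
  have hne : (s : Set (EuclideanSpace ℝ (Fin m))).Nonempty :=
    Finset.coe_nonempty.2 (P.nonempty_of_mem_faces hs)
  rw [Real.Convex.dimH_eq_finrank_vectorSpan (convex_convexHull ℝ _) hne.convexHull,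
    ← direction_affineSpan, affineSpan_convexHull, direction_affineSpan]
  have hpos : 0 < s.card := Finset.card_pos.2 (P.nonempty_of_mem_faces hs)
  have h1 := finrank_vectorSpan_image_finset_le ℝ (id : _ → EuclideanSpace ℝ (Fin m)) s
    (n := s.card - 1) (by omega)
  rw [Finset.image_id] at h1
  have h2 := hcard s hs
  exact_mod_cast h1.trans (by omega)

/-- General position. If the functions `φ i` nearly factor through a map `F` whose image has
dimension at most `n`, then they are uniformly approximated by functions of which at most `n`
vanish at any point: subtract a generic constant vector from the approximation of
`exists_contDiff_approx`. -/
lemma exists_generic {X ι : Type*} [TopologicalSpace X] [CompactSpace X] [Fintype ι]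
    {m n : ℕ} (F : X → EuclideanSpace ℝ (Fin m)) (hF : Continuous F)
    (hdim : dimH (range F) ≤ n)
    (φ : ι → X → ℝ) (hφ : ∀ i, Continuous (φ i)) {τ : ℝ} (hτ : 0 < τ)
    (hfib : ∀ x y, F x = F y → ∀ i, |φ i x - φ i y| < τ) :
    ∃ G : ι → X → ℝ, (∀ i, Continuous (G i)) ∧ (∀ i y, |G i y - φ i y| ≤ 2 * τ) ∧
      ∀ y (J : Finset ι), (∀ i ∈ J, G i y = 0) → J.card ≤ n := by
  obtain ⟨h, hh, happ⟩ := exists_contDiff_approx F hF φ hφ hτ hfib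
  let res : ∀ J : Finset ι, (ι → ℝ) → (J → ℝ) := fun J v j => v j
  have hresc : ∀ J, Continuous (res J) := fun J => by fun_prop
  have hreso : ∀ J, IsOpenMap (res J) := by
    intro J
    let L : (ι → ℝ) →L[ℝ] (J → ℝ) := ContinuousLinearMap.pi fun j => ContinuousLinearMap.proj (j : ι)
    have hL : Function.Surjective L := by
      classical
      intro w
      refine ⟨fun i => if hi : i ∈ J then w ⟨i, hi⟩ else 0, ?_⟩
      ext j
      simp [L]
    exact L.isOpenMap hL
  -- constant vectors whose `J`-part is not a value of the `J`-part of `h` on the image of `F`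
  let Good : {J : Finset ι // J.card = n + 1} → Set (ι → ℝ) :=
    fun J => res J.1 ⁻¹' ((fun p => res J.1 (h p)) '' range F)ᶜ
  have hBo : ∀ J, IsOpen (Good J) := by
    intro J
    refine IsOpen.preimage (hresc _) ?_
    exact ((isCompact_range hF).image ((hresc J.1).comp hh.continuous)).isClosed.isOpen_compl
  have hBd : ∀ J, Dense (Good J) := by
    intro J
    refine Dense.preimage ?_ (hreso J.1)
    have hcd : ContDiff ℝ 1 (fun p => res J.1 (h p)) := by
      rw [contDiff_pi]
      intro j
      exact (contDiff_pi.1 hh) j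
    refine ContDiffOn.dense_compl_image_of_dimH_lt_finrank hcd.contDiffOn convex_univ
      (subset_univ _) (hdim.trans_lt ?_)
    rw [Module.finrank_fintype_fun_eq_card, Fintype.card_coe, J.2]
    exact_mod_cast Nat.lt_succ_self n
  obtain ⟨v, hv, hvτ⟩ := (dense_iInter_of_isOpen hBo hBd).exists_dist_lt 0 hτ
  rw [mem_iInter] at hv
  refine ⟨fun i y => h (F y) i - v i, fun i => ?_, fun i y => ?_, fun y J hJ => ?_⟩
  · exact ((continuous_apply i).comp (hh.continuous.comp hF)).sub continuous_const
  · have h1 := happ y i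
    have h2 : |v i| ≤ τ := by
      rw [dist_zero_left] at hvτ
      exact ((norm_le_pi_norm v i).trans hvτ.le)
    rw [abs_le] at h2 ⊢
    rw [abs_lt] at h1
    constructor <;> linarith
  · by_contra hcon
    obtain ⟨J', hJ', hc⟩ := Finset.exists_subset_card_eq (show n + 1 ≤ J.card by omega)
    refine hv ⟨J', hc⟩ ⟨F y, mem_range_self y, ?_⟩
    ext j
    have := hJ j (hJ' j.2)
    simp only [res]
    linarith

/-- The set whose infimum defines `widim` is nonempty, so the infimum is attained. -/
lemma exists_epsEmbedding {k : ℕ} {X : Type*} [MetricSpace X] [CompactSpace X]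
    (T : (Fin k → ℤ) → X → X) (hT : IsZkAction T) (N : ℕ) (hN : 1 ≤ N) (ε : ℝ) (hε : 0 < ε) :
    ∃ (n m : ℕ) (P : Geometry.SimplicialComplex ℝ (EuclideanSpace ℝ (Fin m))),
    P.faces.Finite ∧ (∀ s ∈ P.faces, s.card ≤ n + 1) ∧
    ∃ f : X → P.space, IsEpsEmbedding (blockRho T dist N) ε f := by
  classical
  have : Nonempty (Fin N) := ⟨⟨0, hN⟩⟩
  let W : X → Set X := fun y => {x | ∀ a : Fin k → Fin N,
    dist (T (fun i => (a i : ℤ)) x) (T (fun i => (a i : ℤ)) y) < ε / 4}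
  have hWo : ∀ y, IsOpen (W y) := by
    intro y
    have : W y = ⋂ a : Fin k → Fin N,
      {x | dist (T (fun i => (a i : ℤ)) x) (T (fun i => (a i : ℤ)) y) < ε / 4} := by
        ext; simp [W]
    rw [this]
    exact isOpen_iInter_of_finite fun a =>
      isOpen_lt ((hT.cont _).dist continuous_const) continuous_const
  obtain ⟨t, ht⟩ := isCompact_univ.elim_finite_subcover W hWo
    (fun y _ => mem_iUnion.2 ⟨y, fun a => by rw [dist_self]; positivity⟩)
  let m := t.card
  let e : Fin m ≃ t := t.equivFin.symm
  have hcov : (univ : Set X) ⊆ ⋃ i : Fin m, W (e i) := by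
    intro x hx
    obtain ⟨y, hy, hxy⟩ := mem_iUnion₂.1 (ht hx)
    exact mem_iUnion.2 ⟨e.symm ⟨y, hy⟩, by simpa using hxy⟩
  obtain ⟨ψ, hψ⟩ := PartitionOfUnity.exists_isSubordinate isClosed_univ (fun i : Fin m => W (e i))
    (fun i => hWo _) hcov
  have hsum : ∀ x, ∑ i, ψ i x = 1 := fun x => by
    rw [← finsum_eq_sum_of_fintype]; exact ψ.sum_eq_one (mem_univ x)
  have hsub : ∀ i x, ψ i x ≠ 0 → x ∈ W (e i) := fun i x hx => hψ i (subset_tsupport _ hx)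
  let b : Fin m → EuclideanSpace ℝ (Fin m) := EuclideanSpace.basisFun (Fin m) ℝ
  have hb : AffineIndependent ℝ b :=
    ((EuclideanSpace.basisFun (Fin m) ℝ).orthonormal.linearIndependent).affineIndependent
  let V : Finset (EuclideanSpace ℝ (Fin m)) := Finset.univ.image b
  have hVr : (V : Set (EuclideanSpace ℝ (Fin m))) = range b := by simp [V]
  -- the full simplex spanned by the standard basis
  let P : Geometry.SimplicialComplex ℝ (EuclideanSpace ℝ (Fin m)) :=
    Geometry.SimplicialComplex.ofAffineIndependent
      { faces := {s | s ⊆ V ∧ s.Nonempty}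
        isRelLowerSet_faces := fun s hs =>
          ⟨hs.2, fun u hu hne => ⟨Finset.Subset.trans hu hs.1, hne⟩⟩ }
      (by
        refine hb.range.mono ?_
        rw [← hVr]
        exact iUnion₂_subset fun s hs => Finset.coe_subset.2 hs.1)
  have hPf : ∀ s, s ∈ P.faces ↔ s ⊆ V ∧ s.Nonempty := fun s => Iff.rfl
  let f : X → EuclideanSpace ℝ (Fin m) := fun x => ∑ i, ψ i x • b i
  have hfc : Continuous f := by
    refine continuous_finsetSum _ fun i _ => ?_
    exact (ψ i).continuous.smul continuous_const
  have hfi : ∀ x i, f x i = ψ i x := by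
    intro x i
    simp [f, b, Finset.sum_apply, Pi.single_apply]
  have hfP : ∀ x, f x ∈ P.space := by
    intro x
    refine Geometry.SimplicialComplex.mem_space_iff.2 ⟨V, (hPf V).2 ⟨subset_rfl, ?_⟩, ?_⟩
    · by_contra hne
      rw [Finset.not_nonempty_iff_eq_empty] at hne
      have : (Finset.univ : Finset (Fin m)) = ∅ := by simpa [V] using hne
      have h1 := hsum x
      rw [this] at h1
      simp at h1
    · refine (convex_convexHull ℝ _).sum_mem (fun i _ => ψ.nonneg i x) (hsum x) fun i _ => ?_
      exact subset_convexHull ℝ _ (by simp [V])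
  refine ⟨V.card, m, P, ?_, ?_, fun x => ⟨f x, hfP x⟩, hfc.subtype_mk _, ?_⟩
  · exact (V.powerset.finite_toSet).subset fun s hs => by simpa using ((hPf s).1 hs).1
  · intro s hs
    exact (Finset.card_le_card ((hPf s).1 hs).1).trans (Nat.le_succ _)
  · intro x y hxy
    have hxy' : f x = f y := congrArg Subtype.val hxy
    have hex : ∃ i, ψ i x ≠ 0 := by
      by_contra hcon
      push Not at hcon
      have := hsum x
      simp [hcon] at this
    obtain ⟨i, hi⟩ := hex
    have hi' : ψ i y ≠ 0 := by rwa [← hfi, ← hxy', hfi]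
    have hx := hsub i x hi
    have hy := hsub i y hi'
    have : blockRho T dist N x y ≤ ε / 2 := by
      refine ciSup_le fun a => ?_
      have := dist_triangle_right (T (fun i => (a i : ℤ)) x) (T (fun i => (a i : ℤ)) y)
        (T (fun i => (a i : ℤ)) (e i))
      have := hx a
      have := hy a
      linarith
    linarith

/-- From `mdim X = 0`: for some block size `N`, the functions `x ↦ f (T^a x)`, `a ∈ [N]`, can be
uniformly approximated by functions of which only a small proportion vanish at any point. -/
lemma exists_block_functions {k : ℕ} {X : Type*} [MetricSpace X] [CompactSpace X]
    (T : (Fin k → ℤ) → X → X) (hT : IsZkAction T) (hmdim : mdim X T = 0)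
    (f : X → ℝ) (hf : Continuous f) {τ δ : ℝ} (hτ : 0 < τ) (hδ : 0 < δ) :
    ∃ N : ℕ, 1 ≤ N ∧ ∃ G : (Fin k → Fin N) → X → ℝ, (∀ a, Continuous (G a)) ∧
      (∀ a y, |G a y - f (T (fun i => (a i : ℤ)) y)| ≤ τ) ∧
      ∀ y (J : Finset (Fin k → Fin N)), (∀ a ∈ J, G a y = 0) → (J.card : ℝ) ≤ δ * (N : ℝ) ^ k := by
  obtain ⟨ε, hε, hfε⟩ := Metric.uniformContinuous_iff.1
    (CompactSpace.uniformContinuous_of_continuous hf) (τ / 2) (by positivity)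
  have h0 : ⨅ (N : ℕ) (_ : 1 ≤ N),
      (widim X (blockRho T dist N) ε : ℝ≥0∞) / (N : ℝ≥0∞) ^ k < ENNReal.ofReal δ := by
    refine lt_of_le_of_lt ?_ (ENNReal.ofReal_pos.2 hδ)
    rw [← hmdim]
    exact le_iSup₂ (f := fun (ε : ℝ) (_ : 0 < ε) => ⨅ (N : ℕ) (_ : 1 ≤ N),
      (widim X (blockRho T dist N) ε : ℝ≥0∞) / (N : ℝ≥0∞) ^ k) ε hε
  obtain ⟨N, h0⟩ := iInf_lt_iff.1 h0
  obtain ⟨hN, h0⟩ := iInf_lt_iff.1 h0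
  set n := widim X (blockRho T dist N) ε with hn
  have hnN : (n : ℝ) ≤ δ * (N : ℝ) ^ k := by
    have hNk : (0 : ℝ) < (N : ℝ) ^ k := by positivity
    have h2 := h0.le
    rw [ENNReal.div_le_iff (by positivity) (by finiteness)] at h2
    rw [← ENNReal.ofReal_natCast, ← ENNReal.ofReal_natCast, ← ENNReal.ofReal_pow (by positivity),
      ← ENNReal.ofReal_mul hδ.le, ENNReal.ofReal_le_ofReal_iff (by positivity)] at h2
    exact h2
  obtain ⟨m, P, hfin, hcard, F, hFc, hFe⟩ := Nat.sInf_mem (exists_epsEmbedding T hT N hN ε hε)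
  change ∀ s ∈ P.faces, s.card ≤ n + 1 at hcard
  have hdim : dimH (range fun x => (F x : EuclideanSpace ℝ (Fin m))) ≤ n :=
    (dimH_mono (by rintro _ ⟨x, rfl⟩; exact (F x).2)).trans (dimH_space_le P hfin hcard)
  obtain ⟨G, hGc, hGa, hGz⟩ := exists_generic (fun x => (F x : EuclideanSpace ℝ (Fin m)))
    (continuous_subtype_val.comp hFc) hdim
    (fun (a : Fin k → Fin N) y => f (T (fun i => (a i : ℤ)) y)) (fun a => hf.comp (hT.cont _))
    (τ := τ / 2) (by positivity) (by
      intro x y hxy a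
      have h1 := hFe x y (Subtype.ext hxy)
      have h2 : dist (T (fun i => (a i : ℤ)) x) (T (fun i => (a i : ℤ)) y) < ε :=
        (le_ciSup (f := fun a : Fin k → Fin N =>
          dist (T (fun i => (a i : ℤ)) x) (T (fun i => (a i : ℤ)) y))
          (Set.finite_range _).bddAbove a).trans_lt h1
      exact hfε h2)
  refine ⟨N, hN, G, hGc, fun a y => by simpa using (hGa a y).trans_eq (by ring), ?_⟩
  intro y J hJ
  exact le_trans (by exact_mod_cast hGz y J hJ) hnN

/-! ### Power diagrams of marker visits -/

/-- Continuous weights of a smoothed power diagram of the visits to a marker set.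
`w c y` is the weight with which the point `y` is assigned to the centre at `T^c y`. Two
different centres seen along one orbit are more than `r` apart, and the inequality
`⟨u₁ - u₂, C' - C⟩ ≤ 0` expresses the convexity of the cells: `u₁` lies (almost) in the cell
of `C` and `u₂` in that of `C'`. -/
lemma exists_weights {k : ℕ} {X : Type*} [MetricSpace X] [CompactSpace X]
    (T : (Fin k → ℤ) → X → X) (hT : IsZkAction T) (hmarker : MarkerProperty T) (r : ℕ) :
    ∃ (B : ℕ) (Box : Finset (Fin k → ℤ)) (w : (Fin k → ℤ) → X → ℝ),
      (∀ c ∈ Box, ∀ i, |c i| ≤ B) ∧ (∀ c, Continuous (w c)) ∧ (∀ c y, 0 ≤ w c y) ∧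
      (∀ y, ∑ c ∈ Box, w c y = 1) ∧
      ∀ (x : X) (C C' u₁ u₂ : Fin k → ℤ), C - u₁ ∈ Box → C' - u₂ ∈ Box →
        0 < w (C - u₁) (T u₁ x) → 0 < w (C' - u₂) (T u₂ x) → C ≠ C' →
        (∃ i, (r : ℤ) < |C i - C' i|) ∧ ∑ i, (u₁ i - u₂ i) * (C' i - C i) ≤ 0 := by
  obtain ⟨U, hUo, hUcov, hUsep⟩ := hmarker (Finset.Icc (fun _ => -(r : ℤ)) (fun _ => (r : ℤ)))
  have hcov : ∀ y, ∃ n, T n y ∈ U := by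
    intro y
    have : y ∈ ⋃ n : Fin k → ℤ, T n '' U := hUcov ▸ mem_univ y
    obtain ⟨n, z, hz, rfl⟩ := mem_iUnion.1 this
    exact ⟨-n, by rwa [← hT.map_add, neg_add_cancel, hT.map_zero]⟩
  obtain ⟨φ, hφc, hφ0, hφU⟩ : ∃ φ : X → ℝ, Continuous φ ∧ (∀ y, 0 ≤ φ y) ∧
      ∀ y, 0 < φ y ↔ y ∈ U := by
    rcases (Uᶜ).eq_empty_or_nonempty with h | h
    · exact ⟨fun _ => 1, continuous_const, fun _ => zero_le_one, fun y => by
        simp [compl_empty_iff.1 h]⟩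
    · refine ⟨fun y => Metric.infDist y Uᶜ, Metric.continuous_infDist_pt _,
        fun _ => Metric.infDist_nonneg, fun y => ?_⟩
      rw [← hUo.isClosed_compl.notMem_iff_infDist_pos h]
      simp
  -- compactness: a bounded search finds a centre where `φ` is bounded below
  obtain ⟨L, hL⟩ : ∃ L : ℕ, ∀ y, ∃ c : Fin k → ℤ, (∀ i, |c i| ≤ L) ∧ 1 / ((L : ℝ) + 1) < φ (T c y) := by
    let W : ℕ → Set X := fun L => ⋃ c : Fin k → ℤ, ⋃ (_ : ∀ i, |c i| ≤ (L : ℤ)),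
      {y | 1 / ((L : ℝ) + 1) < φ (T c y)}
    have hWo : ∀ L, IsOpen (W L) := fun L => isOpen_iUnion fun c => isOpen_iUnion fun _ =>
      isOpen_lt continuous_const (hφc.comp (hT.cont c))
    have hWm : Monotone W := by
      intro L L' hLL y hy
      simp only [W, mem_iUnion, mem_ofPred_eq, exists_prop] at hy ⊢
      obtain ⟨c, hc, hcy⟩ := hy
      refine ⟨c, fun i => (hc i).trans (by exact_mod_cast hLL), lt_of_le_of_lt ?_ hcy⟩
      have : (L : ℝ) ≤ L' := by exact_mod_cast hLL
      gcongr
    obtain ⟨L, hL⟩ := isCompact_univ.elim_directed_cover W hWo (by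
      intro y _
      obtain ⟨n, hn⟩ := hcov y
      have hpos := (hφU _).2 hn
      obtain ⟨j, hj⟩ := exists_nat_one_div_lt hpos
      refine mem_iUnion.2 ⟨max j (∑ i, (n i).natAbs), ?_⟩
      simp only [W, mem_iUnion, mem_ofPred_eq, exists_prop]
      refine ⟨n, fun i => ?_, lt_of_le_of_lt ?_ hj⟩
      · have h1 : (n i).natAbs ≤ ∑ i, (n i).natAbs :=
          Finset.single_le_sum (f := fun i => (n i).natAbs) (fun _ _ => Nat.zero_le _)
            (Finset.mem_univ i)
        rw [Int.abs_eq_natAbs]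
        exact_mod_cast h1.trans (le_max_right _ _)
      · have : (j : ℝ) ≤ (max j (∑ i, (n i).natAbs) : ℕ) := by exact_mod_cast le_max_left _ _
        gcongr) (directed_of_isDirected_le hWm)
    refine ⟨L, fun y => ?_⟩
    have := hL (mem_univ y)
    simp only [W, mem_iUnion, mem_ofPred_eq, exists_prop] at this
    exact this
  -- `S` bounds the smallest power at any point
  let S : ℕ := k * L ^ 2 + (L + 1)
  let B : ℕ := S + 1
  let Box : Finset (Fin k → ℤ) := Finset.Icc (fun _ => -(B : ℤ)) (fun _ => (B : ℤ))
  have hBox : ∀ c, c ∈ Box ↔ ∀ i, |c i| ≤ B := by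
    intro c
    simp only [Box, Finset.mem_Icc, Pi.le_def, abs_le, forall_and]
  let s : X → ℝ := fun z => (max (φ z) (1 / ((S : ℝ) + 2)))⁻¹
  have hmaxpos : ∀ z, 0 < max (φ z) (1 / ((S : ℝ) + 2)) := fun z =>
    lt_max_of_lt_right (by positivity)
  have hs0 : ∀ z, 0 ≤ s z := fun z => inv_nonneg.2 (hmaxpos z).le
  have hsc : Continuous s := (hφc.max continuous_const).inv₀ fun z => (hmaxpos z).ne'
  let P : (Fin k → ℤ) → X → ℝ := fun c y => ∑ i, ((c i : ℤ) : ℝ) ^ 2 + s (T c y)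
  have hPc : ∀ c, Continuous (P c) := fun c => continuous_const.add (hsc.comp (hT.cont c))
  have hBne : Box.Nonempty := ⟨0, (hBox 0).2 fun i => by simp⟩
  let m : X → ℝ := fun y => Box.inf' hBne fun c => P c y
  have hmc : Continuous m := Continuous.finset_inf'_apply hBne fun c _ => hPc c
  have hmS : ∀ y, m y ≤ S := by
    intro y
    obtain ⟨c, hcL, hc⟩ := hL y
    have hcB : c ∈ Box := (hBox c).2 fun i => (hcL i).trans (by
      have : L ≤ B := by simp only [B, S]; omega
      exact_mod_cast this)
    refine (Finset.inf'_le (fun c => P c y) hcB).trans ?_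
    have h1 : ∑ i, ((c i : ℤ) : ℝ) ^ 2 ≤ k * (L : ℝ) ^ 2 := by
      calc ∑ i, ((c i : ℤ) : ℝ) ^ 2 ≤ ∑ _i : Fin k, (L : ℝ) ^ 2 := by
            refine Finset.sum_le_sum fun i _ => ?_
            refine sq_le_sq.2 ?_
            rw [abs_of_nonneg (show (0 : ℝ) ≤ L by positivity)]
            exact_mod_cast hcL i
        _ = k * (L : ℝ) ^ 2 := by simp
    have h2 : s (T c y) ≤ L + 1 := by
      have h3 : 1 / ((L : ℝ) + 1) ≤ max (φ (T c y)) (1 / ((S : ℝ) + 2)) :=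
        hc.le.trans (le_max_left _ _)
      calc s (T c y) ≤ (1 / ((L : ℝ) + 1))⁻¹ := inv_anti₀ (by positivity) h3
        _ = L + 1 := by simp
    simp only [P, S]
    push_cast
    linarith
  have hmP : ∀ y c, m y ≤ P c y := by
    intro y c
    by_cases hc : c ∈ Box
    · exact Finset.inf'_le (fun c => P c y) hc
    · rw [hBox] at hc
      push Not at hc
      obtain ⟨i, hi⟩ := hc
      have h1 : ((B : ℝ)) ≤ ((c i : ℤ) : ℝ) ^ 2 := by
        have h2 : (B : ℤ) ≤ c i ^ 2 := by
          rw [← sq_abs]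
          nlinarith [abs_nonneg (c i)]
        exact_mod_cast h2
      have h2 : ((c i : ℤ) : ℝ) ^ 2 ≤ ∑ i, ((c i : ℤ) : ℝ) ^ 2 :=
        Finset.single_le_sum (f := fun i => ((c i : ℤ) : ℝ) ^ 2) (fun _ _ => sq_nonneg _)
          (Finset.mem_univ i)
      have h3 : (B : ℝ) = S + 1 := by simp [B]
      have := hmS y
      have := hs0 (T c y)
      simp only [P]
      linarith
  let wt : (Fin k → ℤ) → X → ℝ := fun c y => max 0 (1 + m y - P c y)
  have hwtc : ∀ c, Continuous (wt c) := fun c =>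
    continuous_const.max ((continuous_const.add hmc).sub (hPc c))
  have hwt0 : ∀ c y, 0 ≤ wt c y := fun c y => le_max_left _ _
  have hsum : ∀ y, 0 < ∑ c ∈ Box, wt c y := by
    intro y
    obtain ⟨c, hc, hcm⟩ := Finset.exists_mem_eq_inf' hBne fun c => P c y
    refine Finset.sum_pos' (fun c _ => hwt0 c y) ⟨c, hc, ?_⟩
    have : m y = P c y := hcm
    simp only [wt, this]
    norm_num
  have hwpos : ∀ c y, 0 < wt c y / ∑ c ∈ Box, wt c y → P c y < 1 + m y := by
    intro c y h
    have h1 : 0 < wt c y := by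
      by_contra hcon
      have : wt c y = 0 := le_antisymm (not_lt.1 hcon) (hwt0 c y)
      simp [this] at h
    have h2 := (lt_max_iff.1 h1).resolve_left (lt_irrefl _)
    linarith
  have hwU : ∀ c y, P c y < 1 + m y → T c y ∈ U := by
    intro c y h
    rw [← hφU]
    by_contra hcon
    have h0 : φ (T c y) = 0 := le_antisymm (not_lt.1 hcon) (hφ0 _)
    have h1 : s (T c y) = S + 2 := by
      simp only [s, h0]
      rw [max_eq_right (by positivity)]
      simp
    have h2 : 0 ≤ ∑ i, ((c i : ℤ) : ℝ) ^ 2 := Finset.sum_nonneg fun _ _ => sq_nonneg _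
    have := hmS y
    simp only [P, h1] at h
    linarith
  refine ⟨B, Box, fun c y => wt c y / ∑ c ∈ Box, wt c y, fun c hc => (hBox c).1 hc, fun c => ?_,
    fun c y => ?_, fun y => ?_, ?_⟩
  · exact (hwtc c).div (continuous_finsetSum _ fun c _ => hwtc c) fun y => (hsum y).ne'
  · exact div_nonneg (hwt0 c y) (hsum y).le
  · rw [← Finset.sum_div, div_self (hsum y).ne']
  · intro x C C' u₁ u₂ _ _ h₁ h₂ hne
    have p₁ := hwpos _ _ h₁
    have p₂ := hwpos _ _ h₂
    have hTT : ∀ C u : Fin k → ℤ, T (C - u) (T u x) = T C x := fun C u => by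
      rw [← hT.map_add, sub_add_cancel]
    have hC : T C x ∈ U := by rw [← hTT C u₁]; exact hwU _ _ p₁
    have hC' : T C' x ∈ U := by rw [← hTT C' u₂]; exact hwU _ _ p₂
    constructor
    · by_contra hcon
      push Not at hcon
      have hmem : C - C' ∈ Finset.Icc (fun _ : Fin k => -(r : ℤ)) (fun _ => (r : ℤ)) := by
        rw [Finset.mem_Icc]
        exact ⟨fun i => (abs_le.1 (hcon i)).1, fun i => (abs_le.1 (hcon i)).2⟩
      have h := hUsep _ hmem (sub_ne_zero.2 hne)
      have : T C x ∈ U ∩ T (C - C') '' U :=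
        ⟨hC, T C' x, hC', by rw [← hT.map_add, sub_add_cancel]⟩
      rw [h] at this
      exact this
    · -- adding the two near-minimality inequalities cancels the weights `s`
      have q₁ := hmP (T u₁ x) (C' - u₁)
      have q₂ := hmP (T u₂ x) (C - u₂)
      simp only [P, hTT, Pi.sub_apply, Int.cast_sub] at p₁ p₂ q₁ q₂
      have hid : ∑ i, ((C i : ℝ) - u₁ i) ^ 2 + ∑ i, ((C' i : ℝ) - u₂ i) ^ 2
          - ∑ i, ((C' i : ℝ) - u₁ i) ^ 2 - ∑ i, ((C i : ℝ) - u₂ i) ^ 2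
          = 2 * ∑ i, ((u₁ i : ℝ) - u₂ i) * (C' i - C i) := by
        rw [Finset.mul_sum, ← Finset.sum_add_distrib, ← Finset.sum_sub_distrib,
          ← Finset.sum_sub_distrib]
        exact Finset.sum_congr rfl fun i _ => by ring
      have hlt : ∑ i, ((u₁ i : ℝ) - u₂ i) * (C' i - C i) < 1 := by linarith
      have hlt' : ∑ i, (u₁ i - u₂ i) * (C' i - C i) < 1 := by exact_mod_cast hlt
      omega

/-- Volume bound for fattened cells. If the cells satisfy the separation and convexity
properties of `exists_weights`, then contracting each cell towards its centre by the ratio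
`p / (p + 1)` makes their `N`-neighbourhoods disjoint. Multiplying by `p + 1`, this says that
the lattice points `p u' + t + C` with `0 ≤ t < p` are distinct, and counting them bounds the
number of pairs `(C, u')` with `u'` in the `N`-neighbourhood of the cell of `C`. -/
lemma card_pairs_le {k : ℕ} (near : (Fin k → ℤ) → (Fin k → ℤ) → Prop) (p N B M r : ℕ)
    (hr : p + 2 * p * (N + 1) * k ≤ r)
    (hsep : ∀ C C' u₁ u₂, near C u₁ → near C' u₂ → C ≠ C' →
      (∃ i, (r : ℤ) < |C i - C' i|) ∧ ∑ i, (u₁ i - u₂ i) * (C' i - C i) ≤ 0)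
    (Q : Finset ((Fin k → ℤ) × (Fin k → ℤ)))
    (hQ : ∀ z ∈ Q, ∃ u, near z.1 u ∧ (∀ i, 0 ≤ u i ∧ u i < M) ∧ (∀ i, |u i - z.2 i| ≤ N) ∧
      ∀ i, |z.1 i - u i| ≤ B) :
    Q.card * p ^ k ≤ ((p + 1) * M + (2 * p * N + 2 * B)) ^ k := by
  classical
  let Φ : ((Fin k → ℤ) × (Fin k → ℤ)) × (Fin k → Fin p) → (Fin k → ℤ) :=
    fun z i => p * z.1.2 i + z.2 i + z.1.1 i
  let lo : Fin k → ℤ := fun _ => -(p * N + B)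
  let hi : Fin k → ℤ := fun _ => (p + 1) * M + p * N + B - 1
  have hcard : (Finset.Icc lo hi).card = ((p + 1) * M + (2 * p * N + 2 * B)) ^ k := by
    rw [Pi.card_Icc]
    simp only [Int.card_Icc, lo, hi, Finset.prod_const, Finset.card_univ, Fintype.card_fin]
    congr 1
    have : ((p : ℤ) + 1) * M + p * N + B - 1 + 1 - -(p * N + B)
      = (((p + 1) * M + (2 * p * N + 2 * B) : ℕ) : ℤ) := by push_cast; ring
    rw [this, Int.toNat_natCast]
  have hcard' : (Q ×ˢ (Finset.univ : Finset (Fin k → Fin p))).card = Q.card * p ^ k := by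
    rw [Finset.card_product]
    simp
  rw [← hcard, ← hcard']
  refine Finset.card_le_card_of_injOn Φ ?_ ?_
  · rintro ⟨⟨C, v⟩, t⟩ hz
    obtain ⟨u, -, hu, huv, huC⟩ := hQ (C, v) (by simpa using hz)
    simp only at huv huC
    simp only [Finset.coe_Icc, mem_Icc, Pi.le_def, lo, hi, Φ, ← forall_and]
    intro i
    have h1 := hu i
    have h2 := abs_le.1 (huv i)
    have h3 := abs_le.1 (huC i)
    have h4 : ((t i : ℕ) : ℤ) + 1 ≤ p := by exact_mod_cast (t i).2
    have h5 : (0 : ℤ) ≤ (t i : ℕ) := Int.natCast_nonneg _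
    have hp : (0 : ℤ) ≤ p := Int.natCast_nonneg _
    have h6 : (p : ℤ) * v i ≤ p * (M - 1 + N) := mul_le_mul_of_nonneg_left (by linarith) hp
    have h7 : (p : ℤ) * (-N) ≤ p * v i := mul_le_mul_of_nonneg_left (by linarith) hp
    constructor <;> linarith
  · rintro ⟨⟨C, v⟩, t⟩ hz ⟨⟨C', v'⟩, t'⟩ hz' heq
    have heqi : ∀ i, (p : ℤ) * v i + t i + C i = p * v' i + t' i + C' i := fun i =>
      congrFun heq i
    by_cases hCC : C = C'
    · subst hCC
      have hboth : ∀ i, v i = v' i ∧ t i = t' i := by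
        intro i
        have h0 := heqi i
        have hp : (0 : ℤ) < p := by exact_mod_cast (Nat.zero_le _).trans_lt (t i).2
        have e1 : (((t i : ℕ) : ℤ) + p * v i) / p = v i := by
          rw [Int.add_mul_ediv_left _ _ hp.ne', Int.ediv_eq_zero_of_lt (by positivity)
            (by exact_mod_cast (t i).2), zero_add]
        have e2 : (((t' i : ℕ) : ℤ) + p * v' i) / p = v' i := by
          rw [Int.add_mul_ediv_left _ _ hp.ne', Int.ediv_eq_zero_of_lt (by positivity)
            (by exact_mod_cast (t' i).2), zero_add]
        have hv : v i = v' i := by rw [← e1, ← e2]; congr 1; linarith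
        refine ⟨hv, Fin.ext ?_⟩
        rw [hv] at h0
        have : ((t i : ℕ) : ℤ) = (t' i : ℕ) := by linarith
        exact_mod_cast this
      have hv : v = v' := funext fun i => (hboth i).1
      have ht : t = t' := funext fun i => (hboth i).2
      rw [hv, ht]
    · exfalso
      obtain ⟨u, hnear, -, huv, -⟩ := hQ (C, v) (by simpa using hz)
      obtain ⟨u', hnear', -, huv', -⟩ := hQ (C', v') (by simpa using hz')
      simp only at hnear hnear' huv huv'
      obtain ⟨⟨i₀, hi₀⟩, hle⟩ := hsep C C' u u' hnear hnear' hCC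
      have hne : (Finset.univ : Finset (Fin k)).Nonempty := ⟨i₀, Finset.mem_univ _⟩
      obtain ⟨j, -, hj⟩ := Finset.exists_max_image Finset.univ (fun i => |C' i - C i|) hne
      set μ := |C' j - C j| with hμ
      have hμr : (r : ℤ) < μ := by
        have := hj i₀ (Finset.mem_univ _)
        rw [abs_sub_comm] at this
        exact hi₀.trans_le this
      have hp0 : (0 : ℤ) ≤ p := Int.natCast_nonneg _
      have hμ0 : 0 < μ := lt_of_le_of_lt (Int.natCast_nonneg r) hμr
      -- coordinatewise: `p (u - u') Δ ≥ Δ² - 2 p (N + 1) |Δ|` where `Δ = C' - C`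
      have hterm : ∀ i, (C' i - C i) ^ 2 - 2 * p * (N + 1) * μ
          ≤ p * ((u i - u' i) * (C' i - C i)) := by
        intro i
        have a1 := abs_le.1 (huv i)
        have a2 := abs_le.1 (huv' i)
        have b1 : ((t i : ℕ) : ℤ) ≤ p := by exact_mod_cast (t i).2.le
        have b2 : ((t' i : ℕ) : ℤ) ≤ p := by exact_mod_cast (t' i).2.le
        have b3 : (0 : ℤ) ≤ (t i : ℕ) := Int.natCast_nonneg _
        have b4 : (0 : ℤ) ≤ (t' i : ℕ) := Int.natCast_nonneg _
        set e := (p : ℤ) * (u i - u' i) - (C' i - C i) with he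
        have hee : e = p * (u i - v i) - p * (u' i - v' i) + t' i - t i := by
          have := heqi i
          rw [he]; linarith
        have m1 : (p : ℤ) * (u i - v i) ≤ p * N := mul_le_mul_of_nonneg_left a1.2 hp0
        have m2 : (p : ℤ) * (-N) ≤ p * (u i - v i) := mul_le_mul_of_nonneg_left a1.1 hp0
        have m3 : (p : ℤ) * (u' i - v' i) ≤ p * N := mul_le_mul_of_nonneg_left a2.2 hp0
        have m4 : (p : ℤ) * (-N) ≤ p * (u' i - v' i) := mul_le_mul_of_nonneg_left a2.1 hp0
        have hea : |e| ≤ 2 * p * (N + 1) := by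
          rw [abs_le]
          constructor <;> linarith
        have hprod : |e * (C' i - C i)| ≤ 2 * p * (N + 1) * μ := by
          rw [abs_mul]
          exact mul_le_mul hea (hj i (Finset.mem_univ _)) (abs_nonneg _) (by positivity)
        have := (abs_le.1 hprod).1
        have hexp : (p : ℤ) * ((u i - u' i) * (C' i - C i))
            = e * (C' i - C i) + (C' i - C i) ^ 2 := by rw [he]; ring
        rw [hexp]
        linarith
      have hsum := Finset.sum_le_sum fun i (_ : i ∈ (Finset.univ : Finset (Fin k))) => hterm i
      rw [← Finset.mul_sum, Finset.sum_sub_distrib] at hsum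
      simp only [Finset.sum_const, Finset.card_univ, Fintype.card_fin, nsmul_eq_mul] at hsum
      have hsq : μ ^ 2 ≤ ∑ i, (C' i - C i) ^ 2 := by
        rw [hμ, sq_abs]
        exact Finset.single_le_sum (f := fun i => (C' i - C i) ^ 2) (fun _ _ => sq_nonneg _)
          (Finset.mem_univ j)
      have hnp : (p : ℤ) * ∑ i, (u i - u' i) * (C' i - C i) ≤ 0 :=
        mul_nonpos_of_nonneg_of_nonpos hp0 hle
      have hrz : (p : ℤ) + 2 * p * (N + 1) * k ≤ r := by exact_mod_cast hr
      nlinarith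

/-! ### Perturbation to a function with few zeros -/

lemma exists_ratio (k : ℕ) {ζ : ℝ} (hζ : 0 < ζ) :
    ∃ p : ℕ, 1 ≤ p ∧ ((p : ℝ) + 2) ^ k ≤ (1 + ζ) * (p : ℝ) ^ k := by
  have h1 : Tendsto (fun p : ℕ => (1 + 2 / (p : ℝ)) ^ k) atTop (𝓝 1) := by
    have h2 : Tendsto (fun p : ℕ => 1 + 2 / (p : ℝ)) atTop (𝓝 1) := by
      simpa using (tendsto_const_div_atTop_nhds_zero_nat (2 : ℝ)).const_add 1
    simpa using h2.pow k
  obtain ⟨p, hp, hp1⟩ := ((h1.eventually (eventually_lt_nhds (show (1 : ℝ) < 1 + ζ by linarith))).and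
    (eventually_ge_atTop 1)).exists
  refine ⟨p, hp1, ?_⟩
  have hp0 : (0 : ℝ) < p := by exact_mod_cast hp1
  have h3 : ((p : ℝ) + 2) = (1 + 2 / p) * p := by field_simp
  rw [h3, mul_pow]
  exact mul_le_mul_of_nonneg_right hp.le (by positivity)

/-- Density step: every continuous function is uniformly close to one vanishing on a small
proportion of every orbit. -/
lemma exists_perturbation {k : ℕ} {X : Type*} [MetricSpace X] [CompactSpace X]
    (T : (Fin k → ℤ) → X → X) (hT : IsZkAction T) (hmarker : MarkerProperty T)
    (hmdim : mdim X T = 0) (f : X → ℝ) (hf : Continuous f) {τ η : ℝ} (hτ : 0 < τ) (hη : 0 < η) :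
    ∃ g : X → ℝ, Continuous g ∧ (∀ y, |g y - f y| ≤ τ) ∧ ∃ M : ℕ, 1 ≤ M ∧
      ∀ x (J : Finset (Fin k → Fin M)), (∀ a ∈ J, g (T (fun i => (a i : ℤ)) x) = 0) →
        (J.card : ℝ) ≤ η * (M : ℝ) ^ k := by
  classical
  obtain ⟨ζ, hζ, hζ1, hζη⟩ : ∃ ζ : ℝ, 0 < ζ ∧ ζ ≤ 1 ∧ 3 * ζ ≤ η :=
    ⟨min 1 (η / 3), by positivity, min_le_left _ _, by linarith [min_le_right 1 (η / 3)]⟩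
  obtain ⟨N, hN, G, hGc, hGa, hGz⟩ := exists_block_functions T hT hmdim f hf hτ hζ
  obtain ⟨p, hp, hpk⟩ := exists_ratio k hζ
  obtain ⟨B, Box, w, hBox, hwc, hw0, hw1, hwsep⟩ :=
    exists_weights T hT hmarker (p + 2 * p * (N + 1) * k)
  have hN0 : (0 : ℤ) < N := by exact_mod_cast hN
  -- relative to a centre at offset `c`, the origin sits at position `res c` of its `N`-block
  let res : (Fin k → ℤ) → Fin k → ℤ := fun c i => (-c i) % N
  have hres0 : ∀ c i, 0 ≤ res c i := fun c i => Int.emod_nonneg _ hN0.ne'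
  have hresN : ∀ c i, res c i < N := fun c i => Int.emod_lt_of_pos _ hN0
  let α : (Fin k → ℤ) → Fin k → Fin N := fun c i =>
    ⟨(res c i).toNat, by have := hres0 c i; have := hresN c i; omega⟩
  have hα : ∀ c i, ((α c i : ℕ) : ℤ) = res c i := fun c i => Int.toNat_of_nonneg (hres0 c i)
  have hα' : ∀ c, (fun i => ((α c i : ℕ) : ℤ)) = res c := fun c => funext (hα c)
  let g : X → ℝ := fun y => ∑ c ∈ Box, w c y * G (α c) (T (-res c) y)
  have hgc : Continuous g := continuous_finsetSum _ fun c _ =>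
    (hwc c).mul ((hGc _).comp (hT.cont _))
  refine ⟨g, hgc, fun y => ?_, ?_⟩
  · have h1 : g y - f y = ∑ c ∈ Box, w c y * (G (α c) (T (-res c) y) - f y) := by
      simp only [mul_sub, Finset.sum_sub_distrib, ← Finset.sum_mul, hw1, one_mul, g]
    have h2 : ∀ c, |G (α c) (T (-res c) y) - f y| ≤ τ := by
      intro c
      have := hGa (α c) (T (-res c) y)
      rwa [hα', ← hT.map_add, add_neg_cancel, hT.map_zero] at this
    rw [h1]
    calc |∑ c ∈ Box, w c y * (G (α c) (T (-res c) y) - f y)|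
        ≤ ∑ c ∈ Box, |w c y * (G (α c) (T (-res c) y) - f y)| := Finset.abs_sum_le_sum_abs _ _
      _ ≤ ∑ c ∈ Box, w c y * τ := by
          refine Finset.sum_le_sum fun c _ => ?_
          rw [abs_mul, abs_of_nonneg (hw0 c y)]
          exact mul_le_mul_of_nonneg_left (h2 c) (hw0 c y)
      _ = τ := by rw [← Finset.sum_mul, hw1, one_mul]
  -- `M` is so large that the boundary terms in `card_pairs_le` cost at most one more `M`
  let M : ℕ := 2 * p * N + 2 * B + 1
  refine ⟨M, by simp only [M]; omega, fun x J hJ => ?_⟩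
  let ι : (Fin k → Fin M) → Fin k → ℤ := fun u i => (u i : ℤ)
  have hιinj : Function.Injective ι := by
    intro u v h
    funext i
    have h1 : ((u i : ℕ) : ℤ) = (v i : ℕ) := congrFun h i
    exact Fin.ext (by exact_mod_cast h1)
  -- `near C u`: the site `u` of the orbit of `x` has positive weight in the cell of `C`
  let near : (Fin k → ℤ) → (Fin k → ℤ) → Prop := fun C u => C - u ∈ Box ∧ 0 < w (C - u) (T u x)
  -- pairs of a centre and a point in the `N`-neighbourhood of its cell
  let Q : Finset ((Fin k → ℤ) × (Fin k → ℤ)) :=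
    ((Finset.Icc (fun _ => -(B : ℤ)) (fun _ => (M : ℤ) + B)) ×ˢ
      (Finset.Icc (fun _ => -(N : ℤ)) (fun _ => (M : ℤ) + N))).filter fun z =>
        ∃ u : Fin k → Fin M, near z.1 (ι u) ∧ ∀ i, |ι u i - z.2 i| ≤ N
  have hι : ∀ u i, 0 ≤ ι u i ∧ ι u i < M := fun u i =>
    ⟨Int.natCast_nonneg _, by simp only [ι]; exact_mod_cast (u i).2⟩
  have hQmem : ∀ C v, (C, v) ∈ Q ↔ ∃ u : Fin k → Fin M, near C (ι u) ∧ ∀ i, |ι u i - v i| ≤ N := by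
    intro C v
    refine ⟨fun h => (Finset.mem_filter.1 h).2, fun h => Finset.mem_filter.2 ⟨?_, h⟩⟩
    obtain ⟨u, hu, hv⟩ := h
    rw [Finset.mem_product, Finset.mem_Icc, Finset.mem_Icc]
    have h1 : ∀ i, |C i - ι u i| ≤ B := hBox _ hu.1
    refine ⟨⟨fun i => ?_, fun i => ?_⟩, ⟨fun i => ?_, fun i => ?_⟩⟩ <;>
    · have a1 := hι u i
      have a2 := abs_le.1 (h1 i)
      have a3 := abs_le.1 (hv i)
      simp only
      linarith
  have hQcard : (Q.card : ℝ) ≤ (1 + ζ) * (M : ℝ) ^ k := by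
    have h1 := card_pairs_le near p N B M _ le_rfl
      (fun C C' u₁ u₂ h₁ h₂ hne => hwsep x C C' u₁ u₂ h₁.1 h₂.1 h₁.2 h₂.2 hne) Q (by
        rintro ⟨C, v⟩ hz
        obtain ⟨u, hu, hv⟩ := (hQmem C v).1 hz
        exact ⟨ι u, hu, hι u, hv, hBox _ hu.1⟩)
    have h2 : ((p + 1) * M + (2 * p * N + 2 * B)) ^ k ≤ ((p + 2) * M) ^ k := by
      refine Nat.pow_le_pow_left ?_ k
      have : 2 * p * N + 2 * B ≤ M := Nat.le_succ _
      linarith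
    have h3 : (Q.card : ℝ) * (p : ℝ) ^ k ≤ (((p : ℝ) + 2) * M) ^ k := by
      exact_mod_cast h1.trans h2
    rw [mul_pow] at h3
    have hpp : (0 : ℝ) < (p : ℝ) ^ k := by
      have : (0 : ℝ) < p := by exact_mod_cast hp
      positivity
    have h4 : (Q.card : ℝ) * (p : ℝ) ^ k ≤ ((1 + ζ) * (M : ℝ) ^ k) * (p : ℝ) ^ k := by
      refine h3.trans ?_
      have := mul_le_mul_of_nonneg_right hpk (show (0 : ℝ) ≤ (M : ℝ) ^ k by positivity)
      linarith
    exact le_of_mul_le_mul_right h4 hpp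
  -- the offsets of the centres to which the site `u` is assigned
  let D : (Fin k → Fin M) → Finset (Fin k → ℤ) := fun u =>
    Box.filter fun c => 0 < w c (T (ι u) x)
  have hD1 : ∀ u, 1 ≤ (D u).card := by
    intro u
    rw [Nat.one_le_iff_ne_zero, ← Nat.pos_iff_ne_zero, Finset.card_pos]
    by_contra hcon
    rw [Finset.not_nonempty_iff_eq_empty, Finset.filter_eq_empty_iff] at hcon
    have h1 := hw1 (T (ι u) x)
    rw [Finset.sum_eq_zero fun c hc => le_antisymm (not_lt.1 (hcon hc)) (hw0 _ _)] at h1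
    exact zero_ne_one h1
  have hDsum : ∑ u, (D u).card ≤ Q.card := by
    rw [← Finset.card_sigma]
    refine Finset.card_le_card_of_injOn (fun z => (z.2 + ι z.1, ι z.1)) ?_ ?_
    · rintro ⟨u, c⟩ hz
      have hc : c ∈ D u := by simpa using hz
      obtain ⟨hc1, hc2⟩ := Finset.mem_filter.1 hc
      refine (hQmem _ _).2 ⟨u, ⟨?_, ?_⟩, fun i => by simp⟩
      · simpa using hc1
      · simpa using hc2
    · rintro ⟨u, c⟩ _ ⟨u', c'⟩ _ h
      simp only [Prod.mk.injEq] at h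
      obtain rfl := hιinj h.2
      obtain rfl := add_right_cancel h.1
      rfl
  -- sites lying in one cell only, and the remaining ones
  let J₁ := J.filter fun u => (D u).card = 1
  let J₂ := J.filter fun u => ¬ (D u).card = 1
  have hJ12 : J₁.card + J₂.card = J.card := Finset.card_filter_add_card_filter_not _
  have hJ2 : J₂.card + M ^ k ≤ Q.card := by
    refine le_trans ?_ hDsum
    have h1 : ∑ u : Fin k → Fin M, ((if u ∈ J₂ then 1 else 0) + 1) = J₂.card + M ^ k := by
      rw [Finset.sum_add_distrib]
      simp
    rw [← h1]
    refine Finset.sum_le_sum fun u _ => ?_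
    split_ifs with hu
    · have h2 := (Finset.mem_filter.1 hu).2
      have := hD1 u
      omega
    · simpa using hD1 u
  have hex : ∀ u : Fin k → Fin M, ∃ c, u ∈ J₁ → D u = {c} := by
    intro u
    by_cases hu : u ∈ J₁
    · obtain ⟨c, hc⟩ := Finset.card_eq_one.1 (Finset.mem_filter.1 hu).2
      exact ⟨c, fun _ => hc⟩
    · exact ⟨0, fun h => (hu h).elim⟩
  choose γ hγ using hex
  -- a purely assigned site determines its centre and the base point of its block
  let K : (Fin k → Fin M) → (Fin k → ℤ) × (Fin k → ℤ) := fun u => (γ u + ι u, ι u - res (γ u))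
  have hγmem : ∀ u ∈ J₁, γ u ∈ Box ∧ 0 < w (γ u) (T (ι u) x) := fun u hu =>
    Finset.mem_filter.1 (by
      change γ u ∈ D u
      rw [hγ u hu]; exact Finset.mem_singleton_self _)
  have hzero : ∀ u ∈ J₁, G (α (γ u)) (T (K u).2 x) = 0 := by
    intro u hu
    have h0 : g (T (ι u) x) = 0 := hJ u (Finset.mem_filter.1 hu).1
    have hz : ∀ c ∈ Box, c ≠ γ u → w c (T (ι u) x) = 0 := by
      intro c hc hne
      by_contra hcon
      have : c ∈ D u := Finset.mem_filter.2 ⟨hc, lt_of_le_of_ne (hw0 _ _) (Ne.symm hcon)⟩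
      rw [hγ u hu, Finset.mem_singleton] at this
      exact hne this
    have hone := hw1 (T (ι u) x)
    rw [Finset.sum_eq_single (γ u) hz fun h => (h (hγmem u hu).1).elim] at hone
    simp only [g] at h0
    rw [Finset.sum_eq_single (γ u) (fun c hc hne => by rw [hz c hc hne, zero_mul])
      fun h => (h (hγmem u hu).1).elim, hone, one_mul, ← hT.map_add] at h0
    have : (K u).2 = -res (γ u) + ι u := by simp only [K]; abel
    rw [this]
    exact h0
  have hfib : ∀ b ∈ J₁.image K, ((J₁.filter fun u => K u = b).card : ℝ) ≤ ζ * (N : ℝ) ^ k := by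
    intro b _
    have hinj : Set.InjOn (fun u => α (γ u)) (J₁.filter fun u => K u = b) := by
      intro u hu v hv huv
      have hu' := (Finset.mem_filter.1 hu).2
      have hv' := (Finset.mem_filter.1 hv).2
      have h1 : res (γ u) = res (γ v) := by rw [← hα', ← hα']; simp only at huv; rw [huv]
      have h2 : (K u).2 = (K v).2 := by rw [hu', hv']
      simp only [K, h1, sub_left_inj] at h2
      exact hιinj h2
    rw [← Finset.card_image_of_injOn hinj]
    refine hGz (T b.2 x) _ fun a ha => ?_
    obtain ⟨u, hu, rfl⟩ := Finset.mem_image.1 ha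
    obtain ⟨hu1, rfl⟩ := Finset.mem_filter.1 hu
    exact hzero u hu1
  have hJ1 : (J₁.card : ℝ) ≤ (J₁.image K).card * (ζ * (N : ℝ) ^ k) := by
    rw [Finset.card_eq_sum_card_image K J₁]
    push_cast
    refine (Finset.sum_le_sum hfib).trans_eq ?_
    simp
  have hdvd : ∀ c i, (N : ℤ) ∣ -c i - res c i := fun c i => Int.dvd_self_sub_emod
  have hblocks : (J₁.image K).card * N ^ k ≤ Q.card := by
    have h1 : ((J₁.image K) ×ˢ (Finset.univ : Finset (Fin k → Fin N))).card
        = (J₁.image K).card * N ^ k := by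
      rw [Finset.card_product]
      simp
    rw [← h1]
    refine Finset.card_le_card_of_injOn (fun z => (z.1.1, fun i => z.1.2 i + (z.2 i : ℤ))) ?_ ?_
    · rintro ⟨b, a⟩ hz
      have hb : b ∈ J₁.image K := by
        have := (Finset.mem_product.1 (Finset.mem_coe.1 hz)).1
        exact this
      obtain ⟨u, hu, rfl⟩ := Finset.mem_image.1 hb
      refine (hQmem _ _).2 ⟨u, ?_, fun i => ?_⟩
      · simpa [near, K] using hγmem u hu
      · have h2 : ((a i : ℕ) : ℤ) < N := by exact_mod_cast (a i).2
        have h3 : (0 : ℤ) ≤ (a i : ℕ) := Int.natCast_nonneg _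
        have h4 := hres0 (γ u) i
        have h5 := hresN (γ u) i
        simp only [K, Pi.sub_apply]
        rw [abs_le]
        constructor <;> linarith
    · rintro ⟨b, a⟩ hz ⟨b', a'⟩ hz' heq
      obtain ⟨u, hu, rfl⟩ := Finset.mem_image.1 (Finset.mem_product.1 (Finset.mem_coe.1 hz)).1
      obtain ⟨v, hv, rfl⟩ := Finset.mem_image.1 (Finset.mem_product.1 (Finset.mem_coe.1 hz')).1
      simp only [Prod.mk.injEq] at heq
      have e1 : ∀ i, (K u).1 i = (K v).1 i := fun i => congrFun heq.1 i
      have e2 : ∀ i, (K u).2 i + (a i : ℕ) = (K v).2 i + ((a' i : ℕ) : ℤ) :=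
        fun i => congrFun heq.2 i
      -- base points are congruent to their centre modulo `N`
      have haa : ∀ i, a i = a' i := by
        intro i
        have d1 := hdvd (γ u) i
        have d2 := hdvd (γ v) i
        have d3 : (N : ℤ) ∣ ((a i : ℕ) : ℤ) - (a' i : ℕ) := by
          have h6 : ((a i : ℕ) : ℤ) - (a' i : ℕ)
              = (-(γ v) i - res (γ v) i) - (-(γ u) i - res (γ u) i) := by
            have f1 := e1 i
            have f2 := e2 i
            simp only [K, Pi.sub_apply, Pi.add_apply] at f1 f2
            linarith
          rw [h6]
          exact dvd_sub d2 d1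
        have h7 : ((a i : ℕ) : ℤ) - (a' i : ℕ) = 0 := by
          refine Int.eq_zero_of_abs_lt_dvd d3 ?_
          have := (a i).2
          have := (a' i).2
          rw [abs_lt]
          constructor <;> omega
        exact Fin.ext (by omega)
      have hKK : K u = K v := by
        refine Prod.ext heq.1 (funext fun i => ?_)
        have := e2 i
        rw [haa i] at this
        linarith
      rw [hKK, funext haa]
  have hblocks' : ((J₁.image K).card : ℝ) * (N : ℝ) ^ k ≤ Q.card := by exact_mod_cast hblocks
  have hJ2' : (J₂.card : ℝ) + (M : ℝ) ^ k ≤ Q.card := by exact_mod_cast hJ2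
  have hJc : (J.card : ℝ) = J₁.card + J₂.card := by exact_mod_cast hJ12.symm
  have hM0 : (0 : ℝ) ≤ (M : ℝ) ^ k := by positivity
  have hJ1' : (J₁.card : ℝ) ≤ ζ * Q.card := by
    refine hJ1.trans ?_
    have := mul_le_mul_of_nonneg_left hblocks' hζ.le
    linarith
  have h1 : ζ * Q.card ≤ ζ * ((1 + ζ) * (M : ℝ) ^ k) := mul_le_mul_of_nonneg_left hQcard hζ.le
  have h2 : ζ * ((1 + ζ) * (M : ℝ) ^ k) ≤ 2 * ζ * (M : ℝ) ^ k := by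
    have : ζ * (1 + ζ) ≤ 2 * ζ := by nlinarith
    calc ζ * ((1 + ζ) * (M : ℝ) ^ k) = (ζ * (1 + ζ)) * (M : ℝ) ^ k := by ring
      _ ≤ _ := mul_le_mul_of_nonneg_right this hM0
  have h3 : 3 * ζ * (M : ℝ) ^ k ≤ η * (M : ℝ) ^ k := mul_le_mul_of_nonneg_right hζη hM0
  linarith

/-! ### Orbit capacity and genericity -/

/-- The functions vanishing on a proportion at most `η` of some fixed block `[M]` of every orbit
form an open set; this is the upper semicontinuity of orbit capacity on closed sets. -/
lemma isOpen_fewZeros {k : ℕ} {X : Type*} [MetricSpace X] [CompactSpace X]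
    (T : (Fin k → ℤ) → X → X) (hT : IsZkAction T) (η : ℝ) :
    IsOpen {g : C(X, ℝ) | ∃ M : ℕ, 1 ≤ M ∧ ∀ x (J : Finset (Fin k → Fin M)),
      (∀ a ∈ J, g (T (fun i => (a i : ℤ)) x) = 0) → (J.card : ℝ) ≤ η * (M : ℝ) ^ k} := by
  rw [isOpen_iff_mem_nhds]
  rintro g ⟨M, hM, hg⟩
  have key : ∀ᶠ h : C(X, ℝ) in 𝓝 g, ∀ x ∈ (univ : Set X), ∀ J : Finset (Fin k → Fin M),
      (∀ a ∈ J, h (T (fun i => (a i : ℤ)) x) = 0) → (J.card : ℝ) ≤ η * (M : ℝ) ^ k := by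
    refine isCompact_univ.eventually_forall_of_forall_eventually fun x _ => ?_
    rw [eventually_all]
    intro J
    by_cases hJ : ∀ a ∈ J, g (T (fun i => (a i : ℤ)) x) = 0
    · exact Eventually.of_forall fun _ _ => hg x J hJ
    · push Not at hJ
      obtain ⟨a, ha, hne⟩ := hJ
      have hc : Continuous fun z : C(X, ℝ) × X => z.1 (T (fun i => (a i : ℤ)) z.2) :=
        continuous_eval.comp (continuous_fst.prodMk ((hT.cont _).comp continuous_snd))
      filter_upwards [hc.continuousAt.eventually_ne hne] with z hz hz0
      exact (hz (hz0 a ha)).elim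
  filter_upwards [key] with h hh
  exact ⟨M, hM, fun x => hh x (mem_univ x)⟩

lemma ocap_nonneg {k : ℕ} {X : Type*} (T : (Fin k → ℤ) → X → X) (A : Set X) : 0 ≤ ocap T A :=
  Real.iInf_nonneg fun N => div_nonneg
    (Real.iSup_nonneg fun x => Finset.sum_nonneg fun a _ =>
      Set.indicator_nonneg (fun _ _ => zero_le_one) _) (by positivity)

lemma ocap_le {k : ℕ} {X : Type*} [Nonempty X] (T : (Fin k → ℤ) → X → X) (A : Set X)
    {η : ℝ} {M : ℕ} (hM : 1 ≤ M)
    (h : ∀ x (J : Finset (Fin k → Fin M)), (∀ a ∈ J, T (fun i => (a i : ℤ)) x ∈ A) →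
      (J.card : ℝ) ≤ η * (M : ℝ) ^ k) : ocap T A ≤ η := by
  classical
  have hbdd : BddBelow (range fun N : {N : ℕ // 1 ≤ N} =>
      (⨆ x : X, ∑ a : Fin k → Fin N.1,
        A.indicator (fun _ => (1 : ℝ)) (T (fun i => (a i : ℤ)) x)) / (N.1 : ℝ) ^ k) := by
    refine ⟨0, ?_⟩
    rintro _ ⟨N, rfl⟩
    exact div_nonneg (Real.iSup_nonneg fun x => Finset.sum_nonneg fun a _ =>
      Set.indicator_nonneg (fun _ _ => zero_le_one) _) (by positivity)
  refine (ciInf_le hbdd ⟨M, hM⟩).trans ?_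
  have hM0 : (0 : ℝ) < (M : ℝ) ^ k := by
    have : (0 : ℝ) < M := by exact_mod_cast hM
    positivity
  rw [div_le_iff₀ hM0]
  refine ciSup_le fun x => ?_
  have h1 := h x (Finset.univ.filter fun a => T (fun i => (a i : ℤ)) x ∈ A)
    (fun a ha => (Finset.mem_filter.1 ha).2)
  refine le_trans (le_of_eq ?_) h1
  simp only [Set.indicator_apply]
  rw [Finset.sum_boole]

/-- **Corollary.** A `ℤ^k`-system with the marker property and `mdim(X) = 0`
has the small boundary property. -/
theorem stmt_12 (k : ℕ) (hk : 1 ≤ k)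
    (X : Type*) [MetricSpace X] [CompactSpace X]
    (T : (Fin k → ℤ) → X → X) (hT : IsZkAction T) (hmarker : MarkerProperty T)
    (hmdim : mdim X T = 0) :
    ∀ (x : X) (U : Set X), IsOpen U → x ∈ U →
      ∃ V : Set X, IsOpen V ∧ x ∈ V ∧ V ⊆ U ∧ ocap T (frontier V) = 0 := by
  intro x U hU hxU
  have : Nonempty X := ⟨x⟩
  let O : ℕ → Set C(X, ℝ) := fun n => {g : C(X, ℝ) | ∃ M : ℕ, 1 ≤ M ∧
    ∀ x (J : Finset (Fin k → Fin M)), (∀ a ∈ J, g (T (fun i => (a i : ℤ)) x) = 0) →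
      (J.card : ℝ) ≤ (1 / ((n : ℝ) + 1)) * (M : ℝ) ^ k}
  have hOo : ∀ n, IsOpen (O n) := fun n => isOpen_fewZeros T hT _
  have hOd : ∀ n, Dense (O n) := by
    intro n
    rw [Metric.dense_iff]
    intro f ε hε
    obtain ⟨g, hgc, hgf, hM⟩ := exists_perturbation T hT hmarker hmdim f f.continuous
      (half_pos hε) (show (0 : ℝ) < 1 / ((n : ℝ) + 1) by positivity)
    refine ⟨⟨g, hgc⟩, ?_, hM⟩
    rw [Metric.mem_ball]
    exact ((ContinuousMap.dist_le (half_pos hε).le).2 fun y => hgf y).trans_lt (half_lt_self hε)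
  obtain ⟨ρ, hρ, hball⟩ := Metric.isOpen_iff.1 hU x hxU
  -- any function within `ρ / 2` of `f₀` is positive at `x` and nonpositive off the `ρ`-ball
  let f₀ : C(X, ℝ) := ⟨fun y => ρ / 2 - dist y x, by fun_prop⟩
  obtain ⟨g, hg, hgf⟩ := (dense_iInter_of_isOpen hOo hOd).exists_dist_lt f₀
    (show 0 < ρ / 2 by positivity)
  rw [mem_iInter] at hg
  have hclose : ∀ y, |ρ / 2 - dist y x - g y| < ρ / 2 := fun y =>
    (ContinuousMap.dist_apply_le_dist (f := f₀) (g := g) y).trans_lt hgf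
  refine ⟨{y | 0 < g y}, isOpen_lt continuous_const g.continuous, ?_, ?_, ?_⟩
  · have := (abs_lt.1 (hclose x)).2
    rw [dist_self] at this
    change 0 < g x
    linarith
  · intro y hy
    apply hball
    have h1 := (abs_lt.1 (hclose y)).1
    have h2 : 0 < g y := hy
    rw [Metric.mem_ball]
    linarith
  · refine le_antisymm (le_of_forall_pos_le_add fun ε hε => ?_) (ocap_nonneg _ _)
    obtain ⟨n, hn⟩ := exists_nat_one_div_lt hε
    obtain ⟨M, hM, hMg⟩ := hg n
    rw [zero_add]
    refine (ocap_le T _ hM fun z J hJ => hMg z J fun a ha => ?_).trans hn.le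
    exact (frontier_lt_subset_eq continuous_const g.continuous (hJ a ha)).symm
end

section
/- Let k ≥ 1 and let (X,T) be a ℤ^k-system with the marker property and mdim(X) = 0. Let δ > 0 and let f: X → ℝ be a continuous function. Then there exists a continuous function g: X → ℝ with sup_{x∈X} |f(x) − g(x)| < δ and ocap(g^{−1}(0)) < δ. -/
/-!
Mean dimension zero provides approximations of `f` along a box of side `N` that seldom vanish, and
the marker property provides an equivariant tiling of almost all of each orbit by such boxes.
Following one approximation on each box gives `g`.

*Boxes.* For small `ε` and suitable `N`, the space `(X, d_{[N]})` has an `ε`-embedding into a complex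
of dimension `n ≤ η N^k`. The map `x ↦ (f (T^a x))_{a ∈ [N]}` is nearly constant on its fibres, so
it is close to a `C¹` function of the embedding. The image of an `n`-dimensional complex under a
`C¹` map has Hausdorff dimension at most `n`, so a generic small translation leaves at most `n` zero
coordinates at each point (`generic_perturbation`, `exists_block_approximation`).

*Tiling.* From the marker property one gets a continuous `φ : X → [0, 1]` whose support is sparse
along orbits and which equals `1` with bounded gaps. For fixed `x` the site `n ∈ ℤ^k` is lifted to
the point `(n, 1 - φ (T^n x))` of `ℝ^(k+1)`, and the Voronoi cells of these points are intersected with a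
horizontal slice at depth `-S`. Moving from depth `-S` to depth `-(1 - θ) S` towards the centre of
its cell, each cell is mapped by a homothety of ratio at least `1 - θ` deep into the corresponding
cell of the new slice (`pull_gap`). Comparison of volumes shows that all but a proportion of about
`k θ` of the lattice is deep in its cell at depth `-(1 - θ) S` (`card_not_deep`). Each cell is then
filled with boxes of side `N` from the grid based at its centre; a continuous weight `w` records
where the boxes are, degenerating to `0` when a box touches the boundary of its cell
(`exists_tiling_weight`).

*Conclusion.* The function `g` interpolates between `f` and the block approximation with weight
`w`. At a zero of `g` along an orbit, either the site is outside all boxes of weight `1`, which is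
rare, or it is one of the few zeros of the approximation in its box.
-/

open Set Filter
open scoped NNReal ENNReal Topology

/-! ### From mean dimension zero to block maps with few zeros -/

/-- A continuous `ρ` vanishing on the diagonal of a compact space admits an `ε`-embedding into some
finite simplicial complex: the nerve map of a partition of unity subordinate to a cover by sets of small
diameter, with values in a standard simplex. Hence the infimum in `widim` is attained, rather than
being the junk value `sInf ∅ = 0`. -/
lemma exists_eps_embedding {X : Type*} [MetricSpace X] [CompactSpace X] (ρ : X → X → ℝ)
    (hρ : Continuous (fun p : X × X => ρ p.1 p.2)) (h0 : ∀ x, ρ x x = 0) {ε : ℝ} (hε : 0 < ε) :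
    ∃ n : ℕ, ∃ (m : ℕ) (P : Geometry.SimplicialComplex ℝ (EuclideanSpace ℝ (Fin m))),
      P.faces.Finite ∧ (∀ s ∈ P.faces, s.card ≤ n + 1) ∧
      ∃ f : X → P.space, IsEpsEmbedding ρ ε f := by
  classical
  have hV : ∀ x : X, ∃ V : Set X, IsOpen V ∧ x ∈ V ∧ ∀ y ∈ V, ∀ z ∈ V, ρ y z < ε := by
    intro x
    have hopen : IsOpen {p : X × X | ρ p.1 p.2 < ε} := isOpen_lt hρ continuous_const
    have hx : (x, x) ∈ {p : X × X | ρ p.1 p.2 < ε} := by simp [h0, hε]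
    obtain ⟨u, v, hu, hv, hxu, hxv, huv⟩ := isOpen_prod_iff.1 hopen x x hx
    exact ⟨u ∩ v, hu.inter hv, ⟨hxu, hxv⟩, fun y hy z hz => huv (mk_mem_prod hy.1 hz.2)⟩
  choose V hVo hVx hVρ using hV
  obtain ⟨t, ht⟩ := isCompact_univ.elim_finite_subcover V hVo
    (fun x _ => mem_iUnion.2 ⟨x, hVx x⟩)
  let e := t.equivFin
  obtain ⟨p, hp⟩ := PartitionOfUnity.exists_isSubordinate (isClosed_univ (X := X))
    (fun i : Fin t.card => V (e.symm i)) (fun i => hVo _) (by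
      intro x hx
      obtain ⟨y, hy, hxy⟩ := mem_iUnion₂.1 (ht hx)
      exact mem_iUnion.2 ⟨e ⟨y, hy⟩, by simpa using hxy⟩)
  let b : Fin t.card → EuclideanSpace ℝ (Fin t.card) := fun i => EuclideanSpace.single i 1
  have hb : LinearIndependent ℝ b := by
    have hbb : b = ⇑(EuclideanSpace.basisFun (Fin t.card) ℝ).toBasis := by
      ext i j
      simp [b]
    rw [hbb]
    exact (EuclideanSpace.basisFun (Fin t.card) ℝ).toBasis.linearIndependent
  let A : PreAbstractSimplicialComplex (EuclideanSpace ℝ (Fin t.card)) :=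
    { faces := {s | s.Nonempty ∧ s ⊆ Finset.univ.image b}
      isRelLowerSet_faces := by
        intro s hs
        exact ⟨hs.1, fun u hu hne => ⟨hne, hu.trans hs.2⟩⟩ }
  let P := Geometry.SimplicialComplex.ofAffineIndependent (𝕜 := ℝ) A (by
    refine hb.affineIndependent.range.mono fun x hx => ?_
    simp only [Set.mem_iUnion, Finset.mem_coe] at hx
    obtain ⟨s, hs, hxs⟩ := hx
    simpa using hs.2 hxs)
  have hsum : ∀ x, ∑ i, p i x = 1 := by
    intro x
    rw [← finsum_eq_sum_of_fintype]
    exact p.sum_eq_one (mem_univ x)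
  have hmem : ∀ x, ∑ i, p i x • b i ∈ P.space := by
    intro x
    have hne : (Finset.univ.image b).Nonempty := by
      by_contra hcon
      have hemp : IsEmpty (Fin t.card) := by
        simpa [Finset.univ_eq_empty_iff] using hcon
      have := hsum x
      simp at this
    refine Geometry.SimplicialComplex.convexHull_subset_space (K := P)
      (s := Finset.univ.image b) ⟨hne, Finset.Subset.refl _⟩ ?_
    refine (convex_convexHull ℝ _).sum_mem (fun i _ => p.nonneg i x) (hsum x) (fun i _ => ?_)
    exact subset_convexHull ℝ _ (by simp)
  refine ⟨t.card, t.card, P, ?_, ?_, fun x => ⟨_, hmem x⟩, ?_, ?_⟩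
  · refine (Finset.univ.image b).powerset.finite_toSet.subset ?_
    intro s hs
    exact Finset.mem_coe.2 (Finset.mem_powerset.2 hs.2)
  · intro s hs
    have := Finset.card_le_card hs.2
    have h2 := Finset.card_image_le (s := Finset.univ) (f := b)
    simp only [Finset.card_univ, Fintype.card_fin] at h2
    lia
  · refine Continuous.subtype_mk ?_ _
    exact continuous_finsetSum _ fun i _ => (p i).continuous.smul continuous_const
  · intro x y hxy
    have hxy' : ∑ i, p i x • b i = ∑ i, p i y • b i := congrArg Subtype.val hxy
    obtain ⟨i, hi⟩ : ∃ i, 0 < p i x := p.exists_pos (mem_univ x)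
    have hc : ∀ z, (∑ j, p j z • b j) i = p i z := by
      intro z
      simp [b, Pi.single_apply]
    have hiy : p i x = p i y := by rw [← hc x, ← hc y, hxy']
    refine hVρ (e.symm i) x ?_ y ?_
    · exact hp i (subset_tsupport _ (by simpa using hi.ne'))
    · exact hp i (subset_tsupport _ (by rw [hiy] at hi; simpa using hi.ne'))

lemma continuous_blockRho {k : ℕ} {X : Type*} [MetricSpace X]
    {T : (Fin k → ℤ) → X → X} (hT : IsZkAction T) {N : ℕ} (hN : 1 ≤ N) :
    Continuous (fun p : X × X => blockRho T dist N p.1 p.2) := by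
  have : Nonempty (Fin N) := ⟨⟨0, hN⟩⟩
  unfold blockRho
  simp_rw [← Finset.sup'_univ_eq_ciSup]
  refine Continuous.finset_sup'_apply _ fun a _ => ?_
  exact ((hT.cont _).comp continuous_fst).dist ((hT.cont _).comp continuous_snd)

/-- A map `F` to `ℝ^ι` that is nearly constant on the fibres of a map `π` into an `n`-dimensional
finite complex is close to a map with at most `n` vanishing coordinates at each point.
First `F` is replaced by `g ∘ π` with `g` of class `C¹` on the ambient Euclidean space. For a set
`A` of `n + 1` coordinates, the `A`-part of `g` maps the complex to a set of Hausdorff dimension at most `n`, so it misses `-y` for a dense open set of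
translations `y`; a small `y` that works for all `A` gives `g ∘ π + y`. -/
lemma generic_perturbation {X : Type*} [MetricSpace X] [CompactSpace X] {ι : Type*} [Fintype ι]
    {m n : ℕ} (P : Geometry.SimplicialComplex ℝ (EuclideanSpace ℝ (Fin m)))
    (hfin : P.faces.Finite) (hcard : ∀ s ∈ P.faces, s.card ≤ n + 1)
    (π : X → P.space) (hπ : Continuous π) (F : X → ι → ℝ) (hF : Continuous F) {δ : ℝ} (hδ : 0 < δ)
    (hπF : ∀ x y, π x = π y → dist (F x) (F y) < δ / 2) :
    ∃ Φ : X → ι → ℝ, Continuous Φ ∧ (∀ x, dist (Φ x) (F x) < δ) ∧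
      ∀ x, {a | Φ x a = 0}.ncard ≤ n := by
  classical
  let q : X → EuclideanSpace ℝ (Fin m) := fun x => (π x : EuclideanSpace ℝ (Fin m))
  have hq : Continuous q := continuous_subtype_val.comp hπ
  -- a smooth map of the ambient space that shadows `F` along `q`
  obtain ⟨g, hg⟩ := exists_contMDiffMap_forall_mem_convex_of_local_const
    (n := 1) (modelWithCornersSelf ℝ (EuclideanSpace ℝ (Fin m)))
    (t := fun p => ⋂ x, ⋂ (_ : q x = p), Metric.ball (F x) (δ / 2))
    (fun p => convex_iInter fun x => convex_iInter fun _ => convex_ball _ _) (by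
      intro p
      obtain ⟨c, hc⟩ : ∃ c : ι → ℝ, ∀ x, q x = p → dist c (F x) < δ / 2 := by
        by_cases h : ∃ x₀, q x₀ = p
        · obtain ⟨x₀, rfl⟩ := h
          exact ⟨F x₀, fun x hx => hπF _ _ (Subtype.ext hx.symm)⟩
        · exact ⟨0, fun x hx => (h ⟨x, hx⟩).elim⟩
      refine ⟨c, ?_⟩
      have hC : IsClosed {x | δ / 2 ≤ dist c (F x)} :=
        isClosed_le continuous_const (continuous_const.dist hF)
      have hqC : IsClosed (q '' {x | δ / 2 ≤ dist c (F x)}) :=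
        (hC.isCompact.image hq).isClosed
      have hp : p ∈ (q '' {x | δ / 2 ≤ dist c (F x)})ᶜ := by
        rintro ⟨x, hx, hxp⟩
        exact absurd (hc x hxp) (not_lt.2 hx)
      filter_upwards [hqC.isOpen_compl.mem_nhds hp] with y hy
      simp only [mem_iInter, Metric.mem_ball]
      intro x hx
      by_contra hcon
      exact hy ⟨x, not_lt.1 hcon, hx⟩)
  have hgs : ContDiff ℝ 1 g := g.contMDiff.contDiff
  -- avoid, for each set of `n + 1` coordinates, the closed nowhere dense set of bad translations
  let O : {A : Finset ι // A.card = n + 1} → Set (ι → ℝ) := fun A =>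
    (-(LinearMap.funLeft ℝ ℝ (Subtype.val : A.1 → ι))) ⁻¹'
      ((fun x => fun a : A.1 => g (q x) a) '' univ)ᶜ
  have hgA : ∀ A : {A : Finset ι // A.card = n + 1},
      ContDiff ℝ 1 (fun p => fun a : A.1 => g p a) := fun A => by
    rw [contDiff_pi]
    intro a
    exact (contDiff_pi.1 hgs) a
  have hOo : ∀ A, IsOpen (O A) := by
    intro A
    refine IsOpen.preimage (LinearMap.continuous_of_finiteDimensional _) ?_
    refine (IsCompact.isClosed (isCompact_univ.image ?_)).isOpen_compl
    exact (hgA A).continuous.comp hq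
  have hOd : ∀ A, Dense (O A) := by
    intro A
    refine Dense.preimage ?_ (LinearMap.isOpenMap_of_finiteDimensional _ ?_)
    · refine dense_compl_of_dimH_lt_finrank ?_
      have h1 : (fun x => fun a : A.1 => g (q x) a) '' univ ⊆
          (fun p => fun a : A.1 => g p a) '' P.space := by
        rintro _ ⟨x, -, rfl⟩
        exact ⟨q x, (π x).2, rfl⟩
      calc dimH _ ≤ dimH ((fun p => fun a : A.1 => g p a) '' P.space) := dimH_mono h1
        _ ≤ dimH P.space := (hgA A).contDiffOn.dimH_image_le convex_univ (subset_univ _)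
        _ ≤ n := dimH_space_le P hfin hcard
        _ < _ := by
          simp only [Module.finrank_fintype_fun_eq_card, Fintype.card_coe, A.2]
          exact_mod_cast Nat.lt_succ_self n
    · intro z
      obtain ⟨y, hy⟩ := LinearMap.funLeft_surjective_of_injective ℝ ℝ _
        (Subtype.val_injective (p := fun a => a ∈ A.1)) (-z)
      exact ⟨y, by simp [hy]⟩
  have hD : Dense (⋂ A, O A) := dense_iInter_of_isOpen hOo hOd
  obtain ⟨y, hyO, hy⟩ := hD.exists_dist_lt 0 (half_pos hδ)
  refine ⟨fun x => g (q x) + y, (hgs.continuous.comp hq).add continuous_const, ?_, ?_⟩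
  · intro x
    have h1 : dist (g (q x)) (F x) < δ / 2 := by
      have := hg (q x)
      simp only [mem_iInter, Metric.mem_ball] at this
      exact this x rfl
    calc dist (g (q x) + y) (F x) ≤ dist (g (q x) + y) (g (q x)) + dist (g (q x)) (F x) :=
          dist_triangle _ _ _
      _ < δ / 2 + δ / 2 := by
          refine add_lt_add ?_ h1
          simpa [dist_eq_norm] using hy
      _ = δ := by ring
  · intro x
    by_contra hcon
    rw [not_le, Set.ncard_eq_toFinset_card'] at hcon
    obtain ⟨A, hA, hAc⟩ := Finset.exists_subset_card_eq (Nat.succ_le_of_lt hcon)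
    have := mem_iInter.1 hyO ⟨A, hAc⟩
    refine this ⟨x, mem_univ _, ?_⟩
    funext a
    have ha := hA a.2
    simp only [mem_toFinset, mem_ofPred_eq, Pi.add_apply] at ha
    simp only [LinearMap.neg_apply, Pi.neg_apply, LinearMap.funLeft_apply]
    linarith

/-- Mean dimension zero yields, for some `N`, a continuous approximation `Φ` of the name
`a ↦ f (T^a x)`, `a ∈ [N]`, in which only a proportion `η` of the coordinates vanish at any point. -/
lemma exists_block_approximation {k : ℕ} {X : Type*} [MetricSpace X] [CompactSpace X]
    {T : (Fin k → ℤ) → X → X} (hT : IsZkAction T) (hmdim : mdim X T = 0)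
    {δ η : ℝ} (hδ : 0 < δ) (hη : 0 < η) {f : X → ℝ} (hf : Continuous f) :
    ∃ N : ℕ, 1 ≤ N ∧ ∃ Φ : X → (Fin k → Fin N) → ℝ, Continuous Φ ∧
      (∀ x a, |Φ x a - f (T (fun i => (a i : ℤ)) x)| < δ) ∧
      ∀ x, ({a | Φ x a = 0}.ncard : ℝ) ≤ η * (N : ℝ) ^ k := by
  obtain ⟨ε, hε, hfε⟩ := Metric.uniformContinuous_iff.1
    (CompactSpace.uniformContinuous_of_continuous hf) (δ / 4) (by positivity)
  have h1 : ⨅ (N : ℕ) (_ : 1 ≤ N), (widim X (blockRho T dist N) ε : ℝ≥0∞) / (N : ℝ≥0∞) ^ k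
      < ENNReal.ofReal η := by
    refine lt_of_le_of_lt ?_ (ENNReal.ofReal_pos.2 hη)
    rw [← hmdim]
    unfold mdim
    exact le_iSup₂ (f := fun (ε : ℝ) (_ : 0 < ε) => ⨅ (N : ℕ) (_ : 1 ≤ N),
      (widim X (blockRho T dist N) ε : ℝ≥0∞) / (N : ℝ≥0∞) ^ k) ε hε
  obtain ⟨N, hN⟩ := iInf_lt_iff.1 h1
  obtain ⟨hN1, hN⟩ := iInf_lt_iff.1 hN
  -- the infimum defining `widim` runs over a nonempty set, hence is attained
  have hmem := Nat.sInf_mem (exists_eps_embedding (blockRho T dist N)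
    (continuous_blockRho hT hN1) (fun x => by simp [blockRho]) hε)
  change widim X (blockRho T dist N) ε ∈ _ at hmem
  obtain ⟨m, P, hfin, hcard, π, hπ, hπε⟩ := hmem
  have hbd : ∀ x y a, dist (T (fun i => ((a : Fin k → Fin N) i : ℤ)) x)
      (T (fun i => (a i : ℤ)) y) ≤ blockRho T dist N x y := fun x y a =>
    le_ciSup (f := fun a : Fin k → Fin N => dist (T (fun i => (a i : ℤ)) x)
      (T (fun i => (a i : ℤ)) y)) (Set.finite_range _).bddAbove a
  obtain ⟨Φ, hΦ, hΦF, hΦ0⟩ := generic_perturbation P hfin hcard π hπ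
    (fun x (a : Fin k → Fin N) => f (T (fun i => (a i : ℤ)) x))
    (continuous_pi fun a => hf.comp (hT.cont _)) hδ (by
      intro x y hxy
      refine lt_of_le_of_lt ((dist_pi_le_iff (by positivity)).2 fun a => ?_)
        (by linarith : δ / 4 < δ / 2)
      exact (hfε ((hbd x y a).trans_lt (hπε x y hxy))).le)
  refine ⟨N, hN1, Φ, hΦ, fun x a => ?_, fun x => ?_⟩
  · rw [← Real.dist_eq]
    exact (dist_le_pi_dist (Φ x) (fun a : Fin k → Fin N => f (T (fun i => (a i : ℤ)) x)) a).trans_lt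
      (hΦF x)
  · have hNpos : (0 : ℝ≥0∞) < (N : ℝ≥0∞) ^ k := by
      have : (N : ℝ≥0∞) ≠ 0 := by exact_mod_cast (by lia : N ≠ 0)
      positivity
    have h2 : (widim X (blockRho T dist N) ε : ℝ≥0∞) ≤ ENNReal.ofReal η * (N : ℝ≥0∞) ^ k := by
      rw [← ENNReal.div_le_iff hNpos.ne' (by finiteness)]
      exact hN.le
    have h3 : (widim X (blockRho T dist N) ε : ℝ) ≤ η * (N : ℝ) ^ k := by
      have h4 := ENNReal.toReal_mono (by finiteness) h2
      simpa [ENNReal.toReal_ofReal hη.le] using h4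
    refine le_trans ?_ h3
    exact_mod_cast hΦ0 x

/-! ### Power diagrams of lattice sites and their deep points -/

/-- The squared Euclidean distance in `ℝ^(k+1)` from the point `(u, -s)` to the lattice site `n`
lifted to height `t n`. Its minimizers in `n` define the Voronoi (power) diagram of the lifted
sites, sliced at level `-s`. -/
def powerDist {k : ℕ} (t : (Fin k → ℤ) → ℝ) (s : ℝ) (u : Fin k → ℝ) (n : Fin k → ℤ) : ℝ :=
  ∑ i, (u i - n i) ^ 2 + (s + t n) ^ 2

/-- Every point `u` lies in a cell of the diagram, because `powerDist` is proper in the site. -/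
lemma exists_powerDist_min {k : ℕ} (t : (Fin k → ℤ) → ℝ) (s : ℝ) (u : Fin k → ℝ) :
    ∃ n, ∀ n', powerDist t s u n ≤ powerDist t s u n' := by
  set c : ℝ := powerDist t s u 0 + 1 with hc
  have hle : ∀ n i, (u i - n i) ^ 2 ≤ powerDist t s u n := by
    intro n i
    have h1 := Finset.single_le_sum (f := fun i => (u i - (n i : ℝ)) ^ 2)
      (fun i _ => sq_nonneg _) (Finset.mem_univ i)
    unfold powerDist
    have := sq_nonneg (s + t n)
    linarith
  have hD0 : 0 ≤ powerDist t s u 0 := by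
    unfold powerDist
    positivity
  let box : Finset (Fin k → ℤ) := Fintype.piFinset fun i => Finset.Icc ⌊u i - c⌋ ⌈u i + c⌉
  have hbox : ∀ n, powerDist t s u n ≤ powerDist t s u 0 → n ∈ box := by
    intro n hn
    refine Fintype.mem_piFinset.2 fun i => ?_
    have h1 := (hle n i).trans hn
    have h2 : |u i - n i| ≤ c := by
      by_contra hcon
      rw [not_le] at hcon
      have : |u i - n i| ^ 2 = (u i - n i) ^ 2 := sq_abs _
      nlinarith
    rw [abs_le] at h2
    rw [Finset.mem_Icc]
    constructor
    · have : (⌊u i - c⌋ : ℝ) ≤ n i := (Int.floor_le _).trans (by linarith)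
      exact_mod_cast this
    · have : (n i : ℝ) ≤ ⌈u i + c⌉ := le_trans (by linarith) (Int.le_ceil _)
      exact_mod_cast this
  obtain ⟨n, hn, hmin⟩ := box.exists_min_image (powerDist t s u) ⟨0, hbox 0 le_rfl⟩
  refine ⟨n, fun n' => ?_⟩
  by_cases h : n' ∈ box
  · exact hmin n' h
  · have h1 : powerDist t s u 0 < powerDist t s u n' := by
      by_contra hcon
      exact h (hbox n' (not_lt.1 hcon))
    exact (hmin 0 (hbox 0 le_rfl)).trans h1.le

/-- Heights in `[0, 1]` on the lattice such that distinct sites of height `< 1` are at sup-distance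
at least `M`, and every site is within sup-distance `R` of a site of height `0`. -/
structure IsHeightFamily {k : ℕ} (t : (Fin k → ℤ) → ℝ) (M R : ℕ) : Prop where
  nonneg : ∀ n, 0 ≤ t n
  le_one : ∀ n, t n ≤ 1
  sep : ∀ n n', n ≠ n' → t n < 1 → t n' < 1 → ∃ i, (M : ℤ) ≤ |n i - n' i|
  dense : ∀ v : Fin k → ℤ, ∃ n, (∀ i, |n i - v i| ≤ R) ∧ t n = 0

/-- Compatibility of the parameters: `N` is the side of the boxes, `S` the level of the slice, and
`θ` the proportion by which the slice is then raised. The separation `M` has to be large compared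
with `N / θ`, and `S` large compared with the covering radius `R`. -/
structure IsScale (k N M R : ℕ) (θ S : ℝ) : Prop where
  hN : 1 ≤ N
  θ_pos : 0 < θ
  θ_le : θ ≤ 1 / 2
  sepM : 2 * (2 * N * k + 1) ≤ θ * M
  height : (k : ℝ) * (R + 1) ^ 2 + 1 ≤ S

section Geometry

variable {k N M R : ℕ} {θ S : ℝ} {t : (Fin k → ℤ) → ℝ}

lemma IsScale.S_pos (hp : IsScale k N M R θ S) : 1 ≤ S := by
  have := hp.height
  have h : (0 : ℝ) ≤ (k : ℝ) * (R + 1) ^ 2 := by positivity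
  linarith

lemma exists_powerDist_le (ht : IsHeightFamily t M R) (s : ℝ) (u : Fin k → ℝ) :
    ∃ n, t n = 0 ∧ powerDist t s u n ≤ (k : ℝ) * (R + 1) ^ 2 + s ^ 2 := by
  obtain ⟨n, hn, hn0⟩ := ht.dense (fun i => ⌊u i⌋)
  refine ⟨n, hn0, ?_⟩
  unfold powerDist
  rw [hn0, add_zero]
  have : ∑ i, (u i - (n i : ℝ)) ^ 2 ≤ ∑ _i : Fin k, ((R : ℝ) + 1) ^ 2 := by
    refine Finset.sum_le_sum fun i _ => ?_
    have h1 : |((n i - ⌊u i⌋ : ℤ) : ℝ)| ≤ R := by exact_mod_cast hn i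
    push_cast at h1
    have h2 := Int.floor_le (u i)
    have h3 := Int.lt_floor_add_one (u i)
    rw [abs_le] at h1
    have : |u i - n i| ≤ (R : ℝ) + 1 := by
      rw [abs_le]
      constructor <;> linarith
    rw [← sq_abs (u i - n i)]
    gcongr
  simp only [Finset.sum_const, Finset.card_univ, Fintype.card_fin, nsmul_eq_mul] at this
  linarith

/-- At level `S` the cell of `u` belongs to a nearby site of height `< 1`: a site of height `1` loses
against a site of height `0` at bounded distance, the difference of the vertical contributions
being at least `2 * S`. -/
lemma winner_lt_one (hp : IsScale k N M R θ S) (ht : IsHeightFamily t M R) {u : Fin k → ℝ}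
    {n : Fin k → ℤ} (hn : ∀ n', powerDist t S u n ≤ powerDist t S u n') :
    t n < 1 ∧ ∀ i, |u i - n i| ≤ k * (R + 1) := by
  obtain ⟨n₀, -, h₀⟩ := exists_powerDist_le ht S u
  have h1 := (hn n₀).trans h₀
  have hS := hp.S_pos
  have hh := hp.height
  have hs0 : 0 ≤ ∑ i, (u i - (n i : ℝ)) ^ 2 := Finset.sum_nonneg fun i _ => sq_nonneg _
  unfold powerDist at h1
  constructor
  · refine lt_of_le_of_ne (ht.le_one n) fun heq => ?_
    rw [heq] at h1
    nlinarith
  · intro i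
    have h2 := Finset.single_le_sum (f := fun i => (u i - (n i : ℝ)) ^ 2)
      (fun i _ => sq_nonneg _) (Finset.mem_univ i)
    have ht0 := ht.nonneg n
    have hk : (1 : ℝ) ≤ k := by
      have := i.pos
      exact_mod_cast this
    refine abs_le_of_sq_le_sq (?_ : _ ≤ _) (by positivity)
    have h3 : (u i - n i) ^ 2 ≤ k * ((R : ℝ) + 1) ^ 2 := by nlinarith
    have h4 : (k : ℝ) * ((R : ℝ) + 1) ^ 2 ≤ k * (k * ((R : ℝ) + 1) ^ 2) :=
      le_mul_of_one_le_left (by positivity) hk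
    calc _ ≤ _ := h3
      _ ≤ _ := h4
      _ = _ := by ring

/-- The ratio in which the slice at level `-(1 - θ) S` divides the segment from `(u, -S)` to
`(n, t n)`. -/
noncomputable def pullRatio (t : (Fin k → ℤ) → ℝ) (θ S : ℝ) (n : Fin k → ℤ) : ℝ :=
  θ * S / (S + t n)

/-- Moving a point `u` of the slice at level `-S` straight towards the lifted site `n` until it
reaches level `-(1 - θ) S`; on the `ℝ^k`-coordinates this is a homothety centred at `n`. -/
noncomputable def pull (t : (Fin k → ℤ) → ℝ) (θ S : ℝ) (n : Fin k → ℤ) (u : Fin k → ℝ) :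
    Fin k → ℝ :=
  AffineMap.homothety (fun i => (n i : ℝ)) (1 - pullRatio t θ S n) u

lemma pull_apply (n : Fin k → ℤ) (u : Fin k → ℝ) (i : Fin k) :
    pull t θ S n u i = (1 - pullRatio t θ S n) * u i + pullRatio t θ S n * n i := by
  simp [pull, AffineMap.homothety_apply]
  ring

lemma pullRatio_bounds (hp : IsScale k N M R θ S) (ht : IsHeightFamily t M R) (n : Fin k → ℤ) :
    θ / 2 ≤ pullRatio t θ S n ∧ pullRatio t θ S n ≤ θ := by
  have hS := hp.S_pos
  have h0 := ht.nonneg n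
  have h1 := ht.le_one n
  have hθ := hp.θ_pos
  unfold pullRatio
  constructor
  · rw [le_div_iff₀ (by linarith)]
    nlinarith
  · rw [div_le_iff₀ (by linarith)]
    nlinarith

/-- If `n` wins at `u`, it wins by a definite margin at the pulled point. This is the convexity of
Voronoi cells in `ℝ^(k+1)`, with the margin measured by the distance between the sites: the
difference of squared distances is affine along the segment from `(u, -S)` to the lifted site `n`,
and equals the squared distance of the two lifted sites at its end. -/
lemma pull_gap (hp : IsScale k N M R θ S) (ht : IsHeightFamily t M R) {u : Fin k → ℝ}
    {n : Fin k → ℤ} (hn : ∀ n', powerDist t S u n ≤ powerDist t S u n') (n' : Fin k → ℤ) :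
    pullRatio t θ S n * ∑ i, ((n i : ℝ) - n' i) ^ 2 ≤
      powerDist t ((1 - θ) * S) (pull t θ S n u) n' -
        powerDist t ((1 - θ) * S) (pull t θ S n u) n := by
  obtain ⟨hτ0, hτ1⟩ := pullRatio_bounds hp ht n
  have hθ := hp.θ_pos
  have hθ' := hp.θ_le
  have hS := hp.S_pos
  have h0 := ht.nonneg n
  have hτ : pullRatio t θ S n * (S + t n) = θ * S := by
    unfold pullRatio
    exact div_mul_cancel₀ _ (by linarith)
  set τ := pullRatio t θ S n with hτdef
  have hs : (1 - θ) * S = (1 - τ) * S - τ * t n := by linarith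
  have key : powerDist t ((1 - θ) * S) (pull t θ S n u) n' -
        powerDist t ((1 - θ) * S) (pull t θ S n u) n =
      (1 - τ) * (powerDist t S u n' - powerDist t S u n) +
        τ * (∑ i, ((n i : ℝ) - n' i) ^ 2 + (t n - t n') ^ 2) := by
    unfold powerDist
    have hsum : ∑ i, (pull t θ S n u i - (n' i : ℝ)) ^ 2 - ∑ i, (pull t θ S n u i - (n i : ℝ)) ^ 2
        = (1 - τ) * (∑ i, (u i - (n' i : ℝ)) ^ 2 - ∑ i, (u i - (n i : ℝ)) ^ 2)
          + τ * ∑ i, ((n i : ℝ) - n' i) ^ 2 := by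
      rw [← Finset.sum_sub_distrib, ← Finset.sum_sub_distrib, Finset.mul_sum, Finset.mul_sum,
        ← Finset.sum_add_distrib]
      refine Finset.sum_congr rfl fun i _ => ?_
      rw [pull_apply, ← hτdef]
      ring
    rw [hs]
    linear_combination hsum
  rw [key]
  have h1 : 0 ≤ (1 - τ) * (powerDist t S u n' - powerDist t S u n) :=
    mul_nonneg (by linarith) (sub_nonneg.2 (hn n'))
  have h2 : 0 ≤ τ * (t n - t n') ^ 2 := mul_nonneg (by linarith) (sq_nonneg _)
  linarith

/-- The lattice site `v` is deep in the cell of `n` at level `s`: the centre `n` is within `B`, and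
at each lattice point `z` at sup-distance less than `N` from `v`, the site `n` wins against every
rival by at least `1`. -/
def IsDeep (t : (Fin k → ℤ) → ℝ) (s : ℝ) (N : ℕ) (B : ℕ) (v n : Fin k → ℤ) : Prop :=
  (∀ i, |v i - n i| ≤ B) ∧ ∀ n', n' ≠ n → ∀ z : Fin k → ℤ, (∀ i, |z i - v i| < N) →
    1 ≤ powerDist t s (fun i => (z i : ℝ)) n' - powerDist t s (fun i => (z i : ℝ)) n

/-- Lattice points within `1` of a pulled point are deep at the new level. Against rivals of height
`< 1` this follows from `pull_gap`, as the margin grows quadratically and the effect of a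
displacement of size `N` only linearly in the distance of the rival. -/
lemma isDeep_of_near_pull (hp : IsScale k N M R θ S) (ht : IsHeightFamily t M R) {u : Fin k → ℝ}
    {n : Fin k → ℤ} (hn : ∀ n', powerDist t S u n ≤ powerDist t S u n') {v : Fin k → ℤ}
    (hv : ∀ i, |(v i : ℝ) - pull t θ S n u i| ≤ 1) :
    IsDeep t ((1 - θ) * S) N (k * (R + 1) + 1) v n := by
  obtain ⟨hτ0, hτ1⟩ := pullRatio_bounds hp ht n
  obtain ⟨htn, hun⟩ := winner_lt_one hp ht hn
  have hθ := hp.θ_pos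
  have hθ' := hp.θ_le
  have hS := hp.S_pos
  refine ⟨fun i => ?_, ?_⟩
  · have h1 := hv i
    have h2 := hun i
    rw [pull_apply] at h1
    set τ := pullRatio t θ S n
    have h3 : |(v i : ℝ) - n i| ≤ k * (R + 1) + 1 := by
      have e1 : (v i : ℝ) - n i = ((v i : ℝ) - ((1 - τ) * u i + τ * n i)) + (1 - τ) * (u i - n i) := by
        ring
      rw [e1]
      refine (abs_add_le _ _).trans ?_
      rw [abs_mul, abs_of_nonneg (by linarith : 0 ≤ 1 - τ)]
      have : (1 - τ) * |u i - n i| ≤ 1 * |u i - n i| :=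
        mul_le_mul_of_nonneg_right (by linarith) (abs_nonneg _)
      linarith
    exact_mod_cast h3
  · -- rivals of height below one are far away, so the gap beats the displacement
    have hcase : ∀ n', n' ≠ n → t n' < 1 → ∀ z : Fin k → ℤ, (∀ i, |z i - v i| < N) →
        1 ≤ powerDist t ((1 - θ) * S) (fun i => (z i : ℝ)) n' -
          powerDist t ((1 - θ) * S) (fun i => (z i : ℝ)) n := by
      intro n' hne htn' z hz
      have hgap := pull_gap hp ht hn n'
      set τ := pullRatio t θ S n
      set p := pull t θ S n u
      obtain ⟨j, hj⟩ := ht.sep n n' hne.symm htn htn'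
      obtain ⟨i₀, -, hi₀⟩ := Finset.exists_max_image Finset.univ
        (fun i => |(n i : ℝ) - n' i|) ⟨j, Finset.mem_univ j⟩
      set μ := |(n i₀ : ℝ) - n' i₀| with hμ
      have hMμ : (M : ℝ) ≤ μ := by
        have h1 : (M : ℝ) ≤ |(n j : ℝ) - n' j| := by exact_mod_cast hj
        exact h1.trans (hi₀ j (Finset.mem_univ j))
      have hQ : μ ^ 2 ≤ ∑ i, ((n i : ℝ) - n' i) ^ 2 := by
        rw [hμ, sq_abs]
        exact Finset.single_le_sum (f := fun i => ((n i : ℝ) - n' i) ^ 2)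
          (fun i _ => sq_nonneg _) (Finset.mem_univ i₀)
      have hshift : powerDist t ((1 - θ) * S) (fun i => (z i : ℝ)) n' -
          powerDist t ((1 - θ) * S) (fun i => (z i : ℝ)) n =
          powerDist t ((1 - θ) * S) p n' - powerDist t ((1 - θ) * S) p n +
          ∑ i, 2 * ((z i : ℝ) - p i) * (n i - n' i) := by
        unfold powerDist
        have : ∑ i, ((z i : ℝ) - (n' i : ℝ)) ^ 2 - ∑ i, ((z i : ℝ) - (n i : ℝ)) ^ 2 =
            ∑ i, (p i - (n' i : ℝ)) ^ 2 - ∑ i, (p i - (n i : ℝ)) ^ 2 +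
            ∑ i, 2 * ((z i : ℝ) - p i) * (n i - n' i) := by
          rw [← Finset.sum_sub_distrib, ← Finset.sum_sub_distrib, ← Finset.sum_add_distrib]
          refine Finset.sum_congr rfl fun i _ => ?_
          ring
        linear_combination this
      have herr : -(2 * N * k * μ) ≤ ∑ i, 2 * ((z i : ℝ) - p i) * (n i - n' i) := by
        have : ∑ _i : Fin k, -(2 * N * μ) ≤ ∑ i, 2 * ((z i : ℝ) - p i) * (n i - n' i) := by
          refine Finset.sum_le_sum fun i _ => ?_
          have h1 : |(z i : ℝ) - p i| ≤ N := by
            have h2 : |z i - v i| ≤ (N : ℤ) - 1 := by have := hz i; lia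
            have h3 : |(z i : ℝ) - v i| ≤ (N : ℝ) - 1 := by exact_mod_cast h2
            have h4 := abs_sub_le (z i : ℝ) (v i) (p i)
            have h5 := hv i
            linarith
          have h2 := hi₀ i (Finset.mem_univ i)
          have h3 : |2 * ((z i : ℝ) - p i) * (n i - n' i)| ≤ 2 * N * μ := by
            rw [abs_mul, abs_mul, abs_two]
            gcongr
          exact (abs_le.1 h3).1
        simp only [Finset.sum_const, Finset.card_univ, Fintype.card_fin, nsmul_eq_mul] at this
        linarith
      have hM1 : 1 ≤ M := by
        rcases Nat.eq_zero_or_pos M with h | h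
        · have := hp.sepM
          rw [h] at this
          have h2 : (0 : ℝ) ≤ 2 * (2 * N * k) := by positivity
          push_cast at this
          linarith
        · exact h
      have hM1' : (1 : ℝ) ≤ M := by exact_mod_cast hM1
      have hτpos : 0 ≤ τ := by linarith
      have hτQ : (2 * N * k + 1) * μ ≤ τ * ∑ i, ((n i : ℝ) - n' i) ^ 2 := by
        calc (2 * N * k + 1) * μ ≤ (θ / 2 * M) * μ := by
              refine mul_le_mul_of_nonneg_right ?_ (by linarith)
              have := hp.sepM
              linarith
          _ ≤ (θ / 2 * μ) * μ := by gcongr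
          _ = θ / 2 * μ ^ 2 := by ring
          _ ≤ τ * ∑ i, ((n i : ℝ) - n' i) ^ 2 := by gcongr
      rw [hshift]
      linarith
    intro n' hne z hz
    rcases lt_or_eq_of_le (ht.le_one n') with h | h
    · exact hcase n' hne h z hz
    · -- a rival of height one loses against the nearby site of height zero
      obtain ⟨n₀, hn₀, hle⟩ := exists_powerDist_le ht ((1 - θ) * S) (fun i => (z i : ℝ))
      have h1 : powerDist t ((1 - θ) * S) (fun i => (z i : ℝ)) n ≤
          powerDist t ((1 - θ) * S) (fun i => (z i : ℝ)) n₀ := by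
        by_cases h : n₀ = n
        · rw [h]
        · have := hcase n₀ h (by rw [hn₀]; norm_num) z hz
          linarith
      have h2 : ((1 - θ) * S + 1) ^ 2 ≤ powerDist t ((1 - θ) * S) (fun i => (z i : ℝ)) n' := by
        unfold powerDist
        rw [h]
        have := Finset.sum_nonneg (fun (i : Fin k) (_ : i ∈ Finset.univ) =>
          sq_nonneg ((z i : ℝ) - n' i))
        linarith
      have h3 := hp.height
      nlinarith

end Geometry

lemma continuous_powerDist {k : ℕ} (t : (Fin k → ℤ) → ℝ) (s : ℝ) (n : Fin k → ℤ) :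
    Continuous fun u => powerDist t s u n := by
  unfold powerDist
  fun_prop

open MeasureTheory in
/-- In the box `[0, L)^k` the sites that are not deep for any centre are few. The pulled cells are
pairwise disjoint, have total volume at least `(1 - θ)^k L^k`, and avoid the unit cubes at those
sites, while everything stays in a slightly larger box. -/
lemma card_not_deep {k N M R : ℕ} {θ S : ℝ} {t : (Fin k → ℤ) → ℝ}
    (hp : IsScale k N M R θ S) (ht : IsHeightFamily t M R) (L : ℕ) (bad : Finset (Fin k → ℤ))
    (hbox : ∀ v ∈ bad, ∀ i, 0 ≤ v i ∧ v i < L)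
    (hbad : ∀ v ∈ bad, ∀ n, ¬ IsDeep t ((1 - θ) * S) N (k * (R + 1) + 1) v n) :
    (bad.card : ℝ) + (1 - θ) ^ k * (L : ℝ) ^ k ≤ ((L : ℝ) + 2 * (k * (R + 1))) ^ k := by
  classical
  have hθ := hp.θ_pos
  have hθ' := hp.θ_le
  set b : ℝ := k * (R + 1) with hb
  have hb0 : 0 ≤ b := by positivity
  let Q : Set (Fin k → ℝ) := Icc (fun _ => 0) (fun _ => (L : ℝ))
  let cell : (Fin k → ℤ) → Set (Fin k → ℝ) := fun n =>
    Q ∩ ⋂ n', {u | powerDist t S u n ≤ powerDist t S u n'}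
  have hcell : ∀ n, IsCompact (cell n) := fun n =>
    isCompact_Icc.inter_right (isClosed_iInter fun n' =>
      isClosed_le (continuous_powerDist t S n) (continuous_powerDist t S n'))
  have hwin : ∀ n, ∀ u ∈ cell n, ∀ n', powerDist t S u n ≤ powerDist t S u n' :=
    fun n u hu n' => mem_iInter.1 hu.2 n'
  have hpullc : ∀ n, Continuous (pull t θ S n) := fun n =>
    AffineMap.homothety_continuous _ _
  let img : (Fin k → ℤ) → Set (Fin k → ℝ) := fun n => pull t θ S n '' cell n
  have himgm : ∀ n, MeasurableSet (img n) := fun n =>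
    ((hcell n).image (hpullc n)).isClosed.measurableSet
  have hdisj : Pairwise (Function.onFun Disjoint img) := by
    intro n n' hne
    rw [Function.onFun, Set.disjoint_left]
    rintro p ⟨u, hu, rfl⟩ ⟨u', hu', hpp⟩
    have hQ : ∀ m m' : Fin k → ℤ, m ≠ m' → 0 < pullRatio t θ S m * ∑ i, ((m i : ℝ) - m' i) ^ 2 := by
      intro m m' hm
      obtain ⟨i, hi⟩ := Function.ne_iff.1 hm
      have h1 := (pullRatio_bounds hp ht m).1
      refine mul_pos (by linarith) (Finset.sum_pos' (fun i _ => sq_nonneg _)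
        ⟨i, Finset.mem_univ i, ?_⟩)
      have : (m i : ℝ) - m' i ≠ 0 := by
        rw [sub_ne_zero]
        exact_mod_cast hi
      positivity
    have h1 := pull_gap hp ht (hwin n u hu) n'
    have h2 := pull_gap hp ht (hwin n' u' hu') n
    rw [hpp] at h2
    have h3 := hQ n n' hne
    have h4 := hQ n' n hne.symm
    linarith
  let cube : (Fin k → ℤ) → Set (Fin k → ℝ) := fun v =>
    Set.pi univ fun i => Ico (v i : ℝ) (v i + 1)
  have hcubem : ∀ v, MeasurableSet (cube v) := fun v =>
    MeasurableSet.univ_pi fun i => measurableSet_Ico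
  have hcubed : ∀ v v', v ≠ v' → Disjoint (cube v) (cube v') := by
    intro v v' hne
    rw [Set.disjoint_left]
    intro p hpv hpv'
    refine hne (funext fun i => ?_)
    have h1 := hpv i (mem_univ i)
    have h2 := hpv' i (mem_univ i)
    rw [← Int.floor_eq_iff.2 h1, ← Int.floor_eq_iff.2 h2]
  have hcubev : ∀ v, volume (cube v) = 1 := by
    intro v
    simp [cube, Real.volume_pi_Ico]
  -- the two families are disjoint and sit in the enlarged box
  have hdd : Disjoint (⋃ v ∈ bad, cube v) (⋃ n, img n) := by
    rw [Set.disjoint_left]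
    intro p hp1 hp2
    obtain ⟨v, hv, hpv⟩ := mem_iUnion₂.1 hp1
    obtain ⟨n, u, hu, rfl⟩ := mem_iUnion.1 hp2
    refine hbad v hv n (isDeep_of_near_pull hp ht (hwin n u hu) fun i => ?_)
    have h1 := hpv i (mem_univ i)
    rw [abs_le]
    constructor <;> linarith [h1.1, h1.2]
  have hsub : (⋃ v ∈ bad, cube v) ∪ (⋃ n, img n) ⊆
      Icc (fun _ : Fin k => -b) (fun _ => (L : ℝ) + b) := by
    rintro p (hp1 | hp2)
    · obtain ⟨v, hv, hpv⟩ := mem_iUnion₂.1 hp1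
      have h2 : ∀ i, (0 : ℝ) ≤ v i ∧ (v i : ℝ) + 1 ≤ L := fun i => by
        have := hbox v hv i
        exact ⟨by exact_mod_cast this.1, by exact_mod_cast this.2⟩
      constructor <;> intro i
      · have h1 := hpv i (mem_univ i)
        have := h2 i
        simp only
        linarith [h1.1]
      · have h1 := hpv i (mem_univ i)
        have := h2 i
        simp only
        linarith [h1.2]
    · obtain ⟨n, u, hu, rfl⟩ := mem_iUnion.1 hp2
      have hun := (winner_lt_one hp ht (hwin n u hu)).2
      obtain ⟨h1, h2⟩ := pullRatio_bounds hp ht n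
      have key : ∀ i, -b ≤ pull t θ S n u i ∧ pull t θ S n u i ≤ L + b := by
        intro i
        rw [pull_apply]
        set τ := pullRatio t θ S n
        have h3 := abs_le.1 (hun i)
        have h4 : (0 : ℝ) ≤ u i := hu.1.1 i
        have h5 : u i ≤ (L : ℝ) := hu.1.2 i
        have e : (1 - τ) * u i + τ * n i = u i - τ * (u i - n i) := by ring
        rw [e]
        have h6 : |τ * (u i - n i)| ≤ b := by
          rw [abs_mul, abs_of_nonneg (by linarith : 0 ≤ τ)]
          have := mul_le_mul (by linarith : τ ≤ 1) (hun i) (abs_nonneg _) zero_le_one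
          linarith
        have h7 := abs_le.1 h6
        constructor <;> linarith
      exact ⟨fun i => (key i).1, fun i => (key i).2⟩
  have hvol1 : volume (⋃ v ∈ bad, cube v) = bad.card := by
    rw [measure_biUnion_finset (fun v _ v' _ h => hcubed v v' h) (fun v _ => hcubem v)]
    simp [hcubev]
  have hvolQ : volume Q = ENNReal.ofReal ((L : ℝ) ^ k) := by
    simp only [Q, Real.volume_Icc_pi]
    rw [ENNReal.ofReal_pow (by positivity)]
    simp
  have hvol2 : ENNReal.ofReal ((1 - θ) ^ k * (L : ℝ) ^ k) ≤ volume (⋃ n, img n) := by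
    rw [measure_iUnion hdisj himgm, ENNReal.ofReal_mul (by
      have : 0 ≤ 1 - θ := by linarith
      positivity)]
    calc ENNReal.ofReal ((1 - θ) ^ k) * ENNReal.ofReal ((L : ℝ) ^ k)
        = ENNReal.ofReal ((1 - θ) ^ k) * volume Q := by rw [hvolQ]
      _ ≤ ENNReal.ofReal ((1 - θ) ^ k) * ∑' n, volume (cell n) := by
        gcongr
        refine (measure_mono ?_).trans (measure_iUnion_le _)
        intro u hu
        obtain ⟨n, hn⟩ := exists_powerDist_min t S u
        exact mem_iUnion.2 ⟨n, hu, mem_iInter.2 hn⟩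
      _ = ∑' n, ENNReal.ofReal ((1 - θ) ^ k) * volume (cell n) := ENNReal.tsum_mul_left.symm
      _ ≤ ∑' n, volume (img n) := by
        refine ENNReal.tsum_le_tsum fun n => ?_
        obtain ⟨h1, h2⟩ := pullRatio_bounds hp ht n
        have himg : img n = AffineMap.homothety (fun i => (n i : ℝ)) (1 - pullRatio t θ S n) ''
            cell n := rfl
        rw [himg, Measure.addHaar_image_homothety]
        gcongr
        rw [Module.finrank_fin_fun, abs_of_nonneg (pow_nonneg (by linarith) _)]
        gcongr
        linarith
  have htotal : (bad.card : ℝ≥0∞) + ENNReal.ofReal ((1 - θ) ^ k * (L : ℝ) ^ k) ≤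
      ENNReal.ofReal (((L : ℝ) + 2 * b) ^ k) := by
    calc (bad.card : ℝ≥0∞) + ENNReal.ofReal ((1 - θ) ^ k * (L : ℝ) ^ k)
        ≤ volume (⋃ v ∈ bad, cube v) + volume (⋃ n, img n) := by rw [hvol1]; gcongr
      _ = volume ((⋃ v ∈ bad, cube v) ∪ ⋃ n, img n) :=
        (measure_union hdd (MeasurableSet.iUnion himgm)).symm
      _ ≤ volume (Icc (fun _ : Fin k => -b) (fun _ => (L : ℝ) + b)) := measure_mono hsub
      _ = ENNReal.ofReal (((L : ℝ) + 2 * b) ^ k) := by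
        rw [Real.volume_Icc_pi, ENNReal.ofReal_pow (by positivity)]
        simp only [Finset.prod_const, Finset.card_univ, Fintype.card_fin]
        congr 2
        ring
  have hnn : 0 ≤ (1 - θ) ^ k * (L : ℝ) ^ k := by
    have : 0 ≤ 1 - θ := by linarith
    positivity
  rw [← ENNReal.ofReal_natCast, ← ENNReal.ofReal_add (by positivity) hnn,
    ENNReal.ofReal_le_ofReal_iff (by positivity)] at htotal
  exact htotal

/-! ### An equivariant choice of disjoint boxes -/

/-- A functional form of the marker property: a bump function whose supports along an orbit are
`M`-separated and which takes the value `1` with bounded gaps along each orbit. -/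
lemma exists_marker_bump {k : ℕ} {X : Type*} [MetricSpace X] [CompactSpace X]
    {T : (Fin k → ℤ) → X → X} (hT : IsZkAction T) (hmarker : MarkerProperty T) (M : ℕ) :
    ∃ φ : X → ℝ, Continuous φ ∧ (∀ x, 0 ≤ φ x ∧ φ x ≤ 1) ∧
      (∀ x (c : Fin k → ℤ), c ≠ 0 → (∀ i, |c i| < (M : ℤ)) → 0 < φ x → 0 < φ (T c x) → False) ∧
      ∃ R : ℕ, ∀ x, ∃ m : Fin k → ℤ, (∀ i, |m i| ≤ (R : ℤ)) ∧ φ (T m x) = 1 := by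
  obtain ⟨U, hUo, hUc, hUd⟩ := hmarker (Fintype.piFinset fun _ => Finset.Ioo (-(M : ℤ)) M)
  obtain ⟨ψ, hψc, hψ0, hψU⟩ : ∃ ψ : X → ℝ, Continuous ψ ∧ (∀ x, 0 ≤ ψ x) ∧
      ∀ x, 0 < ψ x ↔ x ∈ U := by
    by_cases h : (Uᶜ).Nonempty
    · refine ⟨fun x => Metric.infDist x Uᶜ, Metric.continuous_infDist_pt _,
        fun x => Metric.infDist_nonneg, fun x => ?_⟩
      rw [← hUo.isClosed_compl.notMem_iff_infDist_pos h, notMem_compl_iff]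
    · refine ⟨fun _ => 1, continuous_const, fun _ => zero_le_one, fun x => ?_⟩
      have : U = univ := by simpa [Set.not_nonempty_iff_eq_empty] using h
      simp [this]
  have hcov : (univ : Set X) ⊆ ⋃ p : (Fin k → ℤ) × ℕ, {x | 1 / ((p.2 : ℝ) + 1) < ψ (T p.1 x)} := by
    intro x _
    have hx : x ∈ ⋃ n, T n '' U := by rw [hUc]; exact mem_univ x
    obtain ⟨n, u, hu, rfl⟩ := mem_iUnion.1 hx
    obtain ⟨j, hj⟩ := exists_nat_one_div_lt ((hψU u).2 hu)
    refine mem_iUnion.2 ⟨(-n, j), ?_⟩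
    simpa [← hT.map_add, hT.map_zero] using hj
  obtain ⟨F, hF⟩ := isCompact_univ.elim_finite_subcover _
    (fun p : (Fin k → ℤ) × ℕ => isOpen_lt continuous_const (hψc.comp (hT.cont p.1))) hcov
  refine ⟨fun x => min 1 (ψ x * ((F.sup Prod.snd : ℕ) + 1)), by fun_prop, ?_, ?_, ?_⟩
  · intro x
    have := hψ0 x
    exact ⟨le_min zero_le_one (by positivity), min_le_left _ _⟩
  · intro x c hc hcM h1 h2
    have key : ∀ y, 0 < min 1 (ψ y * ((F.sup Prod.snd : ℕ) + 1)) → y ∈ U := by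
      intro y hy
      rw [← hψU]
      have := (lt_min_iff.1 hy).2
      exact pos_of_mul_pos_left this (by positivity)
    have hmem : T c x ∈ U ∩ T c '' U := ⟨key _ h2, x, key _ h1, rfl⟩
    rw [hUd c (Fintype.mem_piFinset.2 fun i => Finset.mem_Ioo.2 (abs_lt.1 (hcM i))) hc] at hmem
    exact hmem
  · refine ⟨F.sup fun p : (Fin k → ℤ) × ℕ => Finset.univ.sup fun i => (p.1 i).natAbs, fun x => ?_⟩
    obtain ⟨p, hpF, hp⟩ := mem_iUnion₂.1 (hF (mem_univ x))
    refine ⟨p.1, fun i => ?_, ?_⟩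
    · have h1 : (p.1 i).natAbs ≤ F.sup fun p : (Fin k → ℤ) × ℕ =>
          Finset.univ.sup fun i => (p.1 i).natAbs :=
        (Finset.le_sup (f := fun i => (p.1 i).natAbs) (Finset.mem_univ i)).trans
          (Finset.le_sup (f := fun p : (Fin k → ℤ) × ℕ =>
            Finset.univ.sup fun i => (p.1 i).natAbs) hpF)
      rw [Int.abs_eq_natAbs]
      exact_mod_cast h1
    · refine min_eq_left ?_
      have h1 : p.2 ≤ F.sup Prod.snd := Finset.le_sup (f := Prod.snd) hpF
      have h2 : (p.2 : ℝ) ≤ (F.sup Prod.snd : ℕ) := by exact_mod_cast h1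
      have h3 : 1 / ((p.2 : ℝ) + 1) < ψ (T p.1 x) := hp
      rw [div_lt_iff₀ (by positivity)] at h3
      refine h3.le.trans ?_
      have := hψ0 (T p.1 x)
      gcongr

/-- Along the orbit of `x`, the function `1 - φ` is a family of heights. -/
lemma isHeightFamily_orbit {k : ℕ} {X : Type*} [MetricSpace X]
    {T : (Fin k → ℤ) → X → X} (hT : IsZkAction T) {M R : ℕ} {φ : X → ℝ}
    (hφ : ∀ x, 0 ≤ φ x ∧ φ x ≤ 1)
    (hsep : ∀ x (c : Fin k → ℤ), c ≠ 0 → (∀ i, |c i| < (M : ℤ)) →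
      0 < φ x → 0 < φ (T c x) → False)
    (hR : ∀ x, ∃ m : Fin k → ℤ, (∀ i, |m i| ≤ (R : ℤ)) ∧ φ (T m x) = 1) (x : X) :
    IsHeightFamily (fun n => 1 - φ (T n x)) M R where
  nonneg n := by linarith [(hφ (T n x)).2]
  le_one n := by linarith [(hφ (T n x)).1]
  sep n n' hne h h' := by
    by_contra! hcon
    refine hsep (T n' x) (n - n') (sub_ne_zero.2 hne) hcon (by linarith) ?_
    rw [← hT.map_add, sub_add_cancel]
    linarith
  dense v := by
    obtain ⟨m, hm, hm1⟩ := hR (T v x)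
    refine ⟨m + v, fun i => by simpa using hm i, ?_⟩
    rw [hT.map_add, hm1, sub_self]

/-- Truncation of a real number to `[0, 1]`. -/
noncomputable def clip (r : ℝ) : ℝ := max 0 (min 1 r)

lemma clip_nonneg (r : ℝ) : 0 ≤ clip r := le_max_left _ _

lemma clip_le_one (r : ℝ) : clip r ≤ 1 := max_le zero_le_one (min_le_left _ _)

lemma clip_eq_one {r : ℝ} (h : 1 ≤ r) : clip r = 1 := by
  simp [clip, min_eq_left h]

lemma pos_of_clip_ne_zero {r : ℝ} (h : clip r ≠ 0) : 0 < r := by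
  by_contra hr
  exact h (max_eq_left ((min_le_right _ _).trans (not_lt.1 hr)))

/-- Equivariance of the diagram: replacing `x` by `T^c x` translates it by `-c`. -/
lemma powerDist_shift {k : ℕ} {X : Type*} [MetricSpace X]
    {T : (Fin k → ℤ) → X → X} (hT : IsZkAction T) (φ : X → ℝ) (s : ℝ) (c b m : Fin k → ℤ) (x : X) :
    powerDist (fun n => 1 - φ (T n (T c x))) s (fun i => (b i : ℝ)) m =
      powerDist (fun n => 1 - φ (T n x)) s (fun i => ((b + c) i : ℝ)) (m + c) := by
  simp [powerDist, hT.map_add]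

lemma exists_growth_bound (k : ℕ) (b : ℝ) {η : ℝ} (hη : 0 < η) :
    ∃ L₀ : ℕ, ∀ L ≥ L₀, ((L : ℝ) + b) ^ k ≤ (1 + η) * (L : ℝ) ^ k := by
  have h : Tendsto (fun L : ℕ => (1 + b / (L : ℝ)) ^ k) atTop (𝓝 ((1 + 0) ^ k)) :=
    ((tendsto_const_div_atTop_nhds_zero_nat b).const_add 1).pow k
  have h2 : ∀ᶠ L : ℕ in atTop, (1 + b / (L : ℝ)) ^ k < 1 + η :=
    h.eventually (gt_mem_nhds (by simpa using hη))
  obtain ⟨L₀, hL₀⟩ := eventually_atTop.1 (h2.and (eventually_ge_atTop 1))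
  refine ⟨L₀, fun L hL => ?_⟩
  obtain ⟨h3, h4⟩ := hL₀ L hL
  have hL0 : (0 : ℝ) < L := by exact_mod_cast h4
  calc ((L : ℝ) + b) ^ k = (1 + b / L) ^ k * (L : ℝ) ^ k := by
        rw [← mul_pow]
        congr 1
        field_simp
    _ ≤ _ := by gcongr

/-- An equivariant tiling of most of each orbit by boxes of side `N`. A position `c` on the orbit of
`x` is the corner of a box when `w (T^c x) > 0`, and two such boxes never overlap. Up to a
proportion `η`, the sites of a large box lie in a box with weight exactly `1`.

The boxes are the translates by `N ℤ^k` of `[0, N)^k`, counted from the centre `n` of a cell, that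
lie inside that cell; `w` is positive when the cell strictly contains the box and equals `1` when
it does so with margin `1`. Only finitely many centres and rivals matter, which makes `w`
continuous. -/
lemma exists_tiling_weight {k : ℕ} {X : Type*} [MetricSpace X] [CompactSpace X]
    {T : (Fin k → ℤ) → X → X} (hT : IsZkAction T) (hmarker : MarkerProperty T)
    {N : ℕ} (hN : 1 ≤ N) {η : ℝ} (hη : 0 < η) :
    ∃ w : X → ℝ, Continuous w ∧ (∀ x, 0 ≤ w x ∧ w x ≤ 1) ∧
      (∀ x (c : Fin k → ℤ), c ≠ 0 → (∀ i, |c i| < (N : ℤ)) → 0 < w x → 0 < w (T c x) → False) ∧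
      ∃ L₀ : ℕ, ∀ L ≥ L₀, ∀ x, ∀ bad : Finset (Fin k → ℤ), (∀ v ∈ bad, ∀ i, 0 ≤ v i ∧ v i < L) →
        (∀ v ∈ bad, ∀ a : Fin k → Fin N, w (T (fun i => v i - (a i : ℤ)) x) ≠ 1) →
        (bad.card : ℝ) ≤ η * (L : ℝ) ^ k := by
  classical
  have hNz : (0 : ℤ) < N := by exact_mod_cast hN
  set θ : ℝ := min (1 / 2) (η / (2 * (k + 1))) with hθdef
  have hθ0 : 0 < θ := lt_min (by norm_num) (by positivity)
  have hθ1 : θ ≤ 1 / 2 := min_le_left _ _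
  have hθk : 1 - η / 2 ≤ (1 - θ) ^ k := by
    have h1 := one_add_mul_le_pow (a := -θ) (by linarith) k
    have h2 : θ * (2 * (k + 1)) ≤ η := by
      rw [← le_div_iff₀ (by positivity)]
      exact min_le_right _ _
    rw [← sub_eq_add_neg] at h1
    linarith
  obtain ⟨M, hM⟩ := exists_nat_ge (2 * (2 * (N : ℝ) * k + 1) / θ)
  rw [div_le_iff₀ hθ0] at hM
  obtain ⟨φ, hφc, hφ01, hφsep, R, hφR⟩ := exists_marker_bump hT hmarker M
  set S : ℝ := (k : ℝ) * (R + 1) ^ 2 + 1 with hS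
  have hp : IsScale k N M R θ S := ⟨hN, hθ0, hθ1, by linarith, le_rfl⟩
  set s : ℝ := (1 - θ) * S with hs
  let t : X → (Fin k → ℤ) → ℝ := fun x n => 1 - φ (T n x)
  have ht : ∀ x, IsHeightFamily (t x) M R := isHeightFamily_orbit hT hφ01 hφsep hφR
  set B : ℕ := k * (R + 1) + 1 + N with hB
  let box : ℕ → Finset (Fin k → ℤ) := fun B => Fintype.piFinset fun _ => Finset.Icc (-(B : ℤ)) B
  have hmbox : ∀ (B : ℕ) (m : Fin k → ℤ), m ∈ box B ↔ ∀ i, |m i| ≤ (B : ℤ) := by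
    intro B m
    simp [box, Fintype.mem_piFinset, abs_le]
  let D : X → (Fin k → ℤ) → (Fin k → ℤ) → ℝ := fun x z m =>
    powerDist (t x) s (fun i => (z i : ℝ)) m
  have hD : ∀ c b m x, D (T c x) b m = D x (b + c) (m + c) := fun c b m x =>
    powerDist_shift hT φ s c b m x
  have hDc : ∀ z m, Continuous fun x => D x z m := by
    intro z m
    exact continuous_const.add
      ((continuous_const.add (continuous_const.sub (hφc.comp (hT.cont m)))).pow 2)
  -- `α m x` tests whether the cell with centre `m` contains the box `[0, N)^k`
  let α : (Fin k → ℤ) → X → ℝ := fun m x => ∏ b : Fin k → Fin N, ∏ m' ∈ (box (B + N)).erase m,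
    clip (D x (fun i => (b i : ℤ)) m' - D x (fun i => (b i : ℤ)) m)
  have hα0 : ∀ m x, 0 ≤ α m x := fun m x =>
    Finset.prod_nonneg fun b _ => Finset.prod_nonneg fun m' _ => clip_nonneg _
  have hα1 : ∀ m x, α m x ≤ 1 := fun m x =>
    Finset.prod_le_one (fun b _ => Finset.prod_nonneg fun m' _ => clip_nonneg _)
      fun b _ => Finset.prod_le_one (fun m' _ => clip_nonneg _) fun m' _ => clip_le_one _
  have hαc : ∀ m, Continuous (α m) := by
    intro m
    refine continuous_finsetProd _ fun b _ => continuous_finsetProd _ fun m' _ => ?_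
    have := (hDc (fun i => (b i : ℤ)) m').sub (hDc (fun i => (b i : ℤ)) m)
    exact continuous_const.max (continuous_const.min this)
  -- the divisibility condition says that the box at `0` is aligned with the centre `m`
  let I : Finset (Fin k → ℤ) := (box B).filter fun m => ∀ i, (N : ℤ) ∣ m i
  let w : X → ℝ := fun x => 1 - ∏ m ∈ I, (1 - α m x)
  have hwpos : ∀ x, 0 < w x → ∃ m : Fin k → ℤ, (∀ i, |m i| ≤ (B : ℤ)) ∧ (∀ i, (N : ℤ) ∣ m i) ∧
      ∀ b : Fin k → ℤ, (∀ i, 0 ≤ b i ∧ b i < N) → ∀ m' : Fin k → ℤ, (∀ i, |m' i| ≤ ((B + N : ℕ) : ℤ)) → m' ≠ m →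
        D x b m < D x b m' := by
    intro x hx
    have : ∃ m ∈ I, α m x ≠ 0 := by
      by_contra! hcon
      have h1 : w x = 0 := by
        simp only [w]
        rw [Finset.prod_eq_one fun m hm => by rw [hcon m hm, sub_zero], sub_self]
      exact hx.ne' h1
    obtain ⟨m, hm, hαm⟩ := this
    obtain ⟨hmB, hmN⟩ := Finset.mem_filter.1 hm
    refine ⟨m, (hmbox B m).1 hmB, hmN, fun b hb m' hm' hne => ?_⟩
    have h1 := Finset.prod_ne_zero_iff.1 hαm
      (fun i => ⟨(b i).toNat, by have := hb i; lia⟩) (Finset.mem_univ _)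
    have h2 := Finset.prod_ne_zero_iff.1 h1 m'
      (Finset.mem_erase.2 ⟨hne, (hmbox _ _).2 hm'⟩)
    have h3 := pos_of_clip_ne_zero h2
    have hbb : (fun i => (((b i).toNat : ℕ) : ℤ)) = b := by
      funext i
      exact Int.toNat_of_nonneg (hb i).1
    simp only [hbb] at h3
    linarith
  have hwone : ∀ x v n, IsDeep (t x) s N (k * (R + 1) + 1) v n →
      ∃ a : Fin k → Fin N, w (T (fun i => v i - (a i : ℤ)) x) = 1 := by
    intro x v n ⟨hvn, hdeep⟩
    have ha : ∀ i, 0 ≤ (v i - n i) % N ∧ (v i - n i) % N < N := fun i =>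
      ⟨Int.emod_nonneg _ hNz.ne', Int.emod_lt_of_pos _ hNz⟩
    -- `v - a` is the corner of the box containing `v` in the grid based at `n`
    refine ⟨fun i => ⟨((v i - n i) % N).toNat, by have := ha i; lia⟩, ?_⟩
    set c : Fin k → ℤ := fun i => v i - (v i - n i) % N with hc
    have hcc : (fun i => v i - ((((v i - n i) % N).toNat : ℕ) : ℤ)) = c := by
      funext i
      rw [Int.toNat_of_nonneg (ha i).1]
    simp only [hcc]
    have hmI : n - c ∈ I := by
      refine Finset.mem_filter.2 ⟨(hmbox _ _).2 fun i => ?_, fun i => ?_⟩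
      · have h1 := hvn i
        have h2 := ha i
        simp only [Pi.sub_apply, hc, hB]
        rw [abs_le] at h1 ⊢
        push_cast at h1 ⊢
        constructor <;> linarith
      · have h1 := Int.emod_add_mul_ediv (v i - n i) N
        refine ⟨-((v i - n i) / N), ?_⟩
        simp only [Pi.sub_apply, hc]
        linarith
    have hα : α (n - c) (T c x) = 1 := by
      refine Finset.prod_eq_one fun b _ => Finset.prod_eq_one fun m' hm' => clip_eq_one ?_
      rw [hD, hD, sub_add_cancel]
      refine hdeep (m' + c) (fun h => (Finset.mem_erase.1 hm').1 (eq_sub_of_add_eq h)) _ fun i => ?_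
      have h2 := ha i
      have h3 := (b i).isLt
      simp only [Pi.add_apply, hc]
      rw [abs_lt]
      constructor <;> lia
    simp only [w]
    rw [Finset.prod_eq_zero hmI (by rw [hα, sub_self]), sub_zero]
  refine ⟨w, ?_, ?_, ?_, ?_⟩
  · exact continuous_const.sub (continuous_finsetProd _ fun m _ => continuous_const.sub (hαc m))
  · intro x
    have h1 : 0 ≤ ∏ m ∈ I, (1 - α m x) := Finset.prod_nonneg fun m _ => by linarith [hα1 m x]
    have h2 : ∏ m ∈ I, (1 - α m x) ≤ 1 :=
      Finset.prod_le_one (fun m _ => by linarith [hα1 m x]) fun m _ => by linarith [hα0 m x]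
    simp only [w]
    constructor <;> linarith
  · intro x c hc0 hcN h1 h2
    obtain ⟨m, hmB, hmN, hm⟩ := hwpos x h1
    obtain ⟨m₂, hm₂B, hm₂N, hm₂⟩ := hwpos (T c x) h2
    -- with the same centre, both boxes would belong to one grid and could not overlap
    have hne : m₂ + c ≠ m := by
      intro h
      refine hc0 (funext fun i => ?_)
      have h3 : (N : ℤ) ∣ c i := by
        have : c i = m i - m₂ i := by rw [← h]; simp
        rw [this]
        exact dvd_sub (hmN i) (hm₂N i)
      exact Int.eq_zero_of_abs_lt_dvd h3 (hcN i)
    -- at a site common to the two boxes, both centres would win strictly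
    let b' : Fin k → ℤ := fun i => max 0 (-c i)
    have e1 := hm (b' + c) (fun i => by
      have := abs_lt.1 (hcN i)
      simp only [b', Pi.add_apply]
      constructor <;> lia) (m₂ + c) (fun i => by
      have h3 := abs_lt.1 (hcN i)
      have h4 := abs_le.1 (hm₂B i)
      simp only [Pi.add_apply]
      rw [abs_le]
      push_cast
      constructor <;> linarith) hne
    have e2 := hm₂ b' (fun i => by
      have := abs_lt.1 (hcN i)
      simp only [b']
      constructor <;> lia) (m - c) (fun i => by
      have h3 := abs_lt.1 (hcN i)
      have h4 := abs_le.1 (hmB i)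
      simp only [Pi.sub_apply]
      rw [abs_le]
      push_cast
      constructor <;> linarith) (fun h => hne (by rw [← h, sub_add_cancel]))
    rw [hD, hD, sub_add_cancel] at e2
    exact lt_asymm e1 e2
  · obtain ⟨L₀, hL₀⟩ := exists_growth_bound k (2 * ((k : ℝ) * (R + 1))) (half_pos hη)
    refine ⟨L₀, fun L hL x bad hbox hbad => ?_⟩
    have h1 := card_not_deep hp (ht x) L bad hbox (fun v hv n hn => by
      obtain ⟨a, ha⟩ := hwone x v n hn
      exact hbad v hv a ha)
    have h2 := hL₀ L hL
    have h3 : (0 : ℝ) ≤ (L : ℝ) ^ k := by positivity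
    nlinarith

/-! ### Gluing the block maps along the boxes -/

/-- The boxes of side `N` with corners in `[-N, L)^k` are disjoint and lie in `[-N, L + N)^k`, which
bounds their number. -/
lemma card_tiles_mul {k : ℕ} {X : Type*} [MetricSpace X]
    {T : (Fin k → ℤ) → X → X} (hT : IsZkAction T) {N : ℕ} {w : X → ℝ}
    (hsep : ∀ x (c : Fin k → ℤ), c ≠ 0 → (∀ i, |c i| < (N : ℤ)) →
      0 < w x → 0 < w (T c x) → False) (L : ℕ) (x : X) (C : Finset (Fin k → ℤ))
    (hC : ∀ c ∈ C, (∀ i, -(N : ℤ) ≤ c i ∧ c i < L) ∧ 0 < w (T c x)) :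
    (C.card : ℝ) * (N : ℝ) ^ k ≤ ((L : ℝ) + 2 * N) ^ k := by
  classical
  have h : (C ×ˢ (Finset.univ : Finset (Fin k → Fin N))).card ≤
      (Fintype.piFinset fun _ : Fin k => Finset.Ico (-(N : ℤ)) (L + N)).card := by
    refine Finset.card_le_card_of_injOn (fun p i => p.1 i + (p.2 i : ℤ)) ?_ ?_
    · intro p hp
      have h1 := (hC p.1 (Finset.mem_product.1 hp).1).1
      refine Finset.mem_coe.2 (Fintype.mem_piFinset.2 fun i => Finset.mem_Ico.2 ?_)
      have h2 := h1 i
      have h3 := (p.2 i).isLt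
      simp only
      constructor <;> lia
    · rintro ⟨c, a⟩ hp ⟨c', a'⟩ hp' heq
      have h1 := (hC c (Finset.mem_product.1 hp).1).2
      have h2 := (hC c' (Finset.mem_product.1 hp').1).2
      have h3 : ∀ i, c i + (a i : ℤ) = c' i + (a' i : ℤ) := fun i => congrFun heq i
      have hcc : c = c' := by
        by_contra hne
        refine hsep (T c x) (c' - c) (sub_ne_zero.2 (Ne.symm hne)) (fun i => ?_) h1 ?_
        · have h4 := h3 i
          have h5 := (a i).isLt
          have h6 := (a' i).isLt
          rw [Pi.sub_apply, abs_lt]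
          constructor <;> omega
        · rwa [← hT.map_add, sub_add_cancel]
      subst hcc
      refine Prod.ext rfl (funext fun i => Fin.ext ?_)
      have h4 := h3 i
      simp only
      lia
  rw [Finset.card_product, Fintype.card_piFinset] at h
  simp only [Finset.card_univ, Fintype.card_fun, Fintype.card_fin, Int.card_Ico,
    Finset.prod_const] at h
  have e : ((L : ℤ) + N - -(N : ℤ)).toNat = L + 2 * N := by lia
  rw [e] at h
  exact_mod_cast h

/-- **Proposition.** A `ℤ^k`-system with the marker property and `mdim(X) = 0`:
any continuous `f : X → ℝ` admits a `δ`-perturbation `g` with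
`ocap(g⁻¹(0)) < δ`. -/
theorem stmt_13 (k : ℕ) (hk : 1 ≤ k)
    (X : Type*) [MetricSpace X] [CompactSpace X]
    (T : (Fin k → ℤ) → X → X) (hT : IsZkAction T) (hmarker : MarkerProperty T)
    (hmdim : mdim X T = 0)
    (δ : ℝ) (hδ : 0 < δ) (f : X → ℝ) (hf : Continuous f) :
    ∃ g : X → ℝ, Continuous g ∧ (∀ x : X, |f x - g x| < δ) ∧
      ocap T (g ⁻¹' {0}) < δ := by
  classical
  set η : ℝ := δ / 4 with hη
  have hη0 : 0 < η := by positivity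
  obtain ⟨N, hN, Φ, hΦc, hΦf, hΦ0⟩ := exists_block_approximation hT hmdim hδ hη0 hf
  obtain ⟨w, hwc, hw01, hwsep, L₀, hbad⟩ := exists_tiling_weight hT hmarker hN hη0
  obtain ⟨L₁, hL₁⟩ := exists_growth_bound k (2 * (N : ℝ)) one_pos
  let neg : (Fin k → Fin N) → Fin k → ℤ := fun a i => -(a i : ℤ)
  have huniq : ∀ x a a', 0 < w (T (neg a) x) → 0 < w (T (neg a') x) → a' = a := by
    intro x a a' h1 h2
    by_contra hne
    refine hwsep (T (neg a) x) (neg a' - neg a) (fun h => hne ?_) (fun i => ?_) h1 ?_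
    · funext i
      have := congrFun h i
      simp only [neg, Pi.sub_apply, Pi.zero_apply] at this
      exact Fin.ext (by lia)
    · have h5 := (a i).isLt
      have h6 := (a' i).isLt
      simp only [neg, Pi.sub_apply]
      rw [abs_lt]
      constructor <;> lia
    · rwa [← hT.map_add, sub_add_cancel]
  have hback : ∀ (a : Fin k → Fin N) x, T (fun i => (a i : ℤ)) (T (neg a) x) = x := by
    intro a x
    rw [← hT.map_add]
    convert hT.map_zero x using 2
    funext i
    simp [neg]
  -- at most one term of the sum is nonzero; where its weight is `1`, `g` takes the value of `Φ`
  let g : X → ℝ := fun x => f x + ∑ a, w (T (neg a) x) * (Φ (T (neg a) x) a - f x)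
  have hg1 : ∀ x a, 0 < w (T (neg a) x) →
      g x = f x + w (T (neg a) x) * (Φ (T (neg a) x) a - f x) := by
    intro x a ha
    simp only [g]
    rw [Finset.sum_eq_single a]
    · intro a' _ hne
      have : w (T (neg a') x) = 0 := by
        by_contra h
        exact hne (huniq x a a' ha (lt_of_le_of_ne (hw01 _).1 (Ne.symm h)))
      rw [this, zero_mul]
    · exact fun h => absurd (Finset.mem_univ a) h
  refine ⟨g, ?_, ?_, ?_⟩
  · refine hf.add (continuous_finsetSum _ fun a _ => (hwc.comp (hT.cont _)).mul (Continuous.sub ?_ hf))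
    exact (continuous_apply a).comp (hΦc.comp (hT.cont _))
  · intro x
    by_cases h : ∃ a, 0 < w (T (neg a) x)
    · obtain ⟨a, ha⟩ := h
      rw [hg1 x a ha]
      have h1 := hΦf (T (neg a) x) a
      rw [hback] at h1
      have h2 := hw01 (T (neg a) x)
      have e : f x - (f x + w (T (neg a) x) * (Φ (T (neg a) x) a - f x)) =
          -(w (T (neg a) x) * (Φ (T (neg a) x) a - f x)) := by ring
      rw [e, abs_neg, abs_mul, abs_of_nonneg h2.1]
      exact (mul_le_of_le_one_left (abs_nonneg _) h2.2).trans_lt h1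
    · push Not at h
      have : g x = f x := by
        simp only [g]
        rw [Finset.sum_eq_zero, add_zero]
        intro a _
        rw [le_antisymm (h a) (hw01 _).1, zero_mul]
      rw [this, sub_self, abs_zero]
      exact hδ
  · set L : ℕ := max (max L₀ L₁) 1 with hL
    have hL1 : 1 ≤ L := le_max_right _ _
    have hLL₀ : L₀ ≤ L := (le_max_left _ _).trans (le_max_left _ _)
    have hLL₁ : L₁ ≤ L := (le_max_right _ _).trans (le_max_left _ _)
    have hLpos : (0 : ℝ) < (L : ℝ) ^ k := by positivity
    have hgrow := hL₁ L hLL₁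
    have hsum : ∀ x, ∑ a : Fin k → Fin L,
        (g ⁻¹' {0}).indicator (fun _ => (1 : ℝ)) (T (fun i => (a i : ℤ)) x) ≤
          3 * η * (L : ℝ) ^ k := by
      intro x
      let Z : Finset (Fin k → ℤ) := (Fintype.piFinset fun _ => Finset.Ico (0 : ℤ) L).filter
        fun v => g (T v x) = 0
      have hZbox : ∀ v ∈ Z, ∀ i, 0 ≤ v i ∧ v i < L := fun v hv i =>
        Finset.mem_Ico.1 (Fintype.mem_piFinset.1 (Finset.mem_filter.1 hv).1 i)
      have hZ : ∑ a : Fin k → Fin L,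
          (g ⁻¹' {0}).indicator (fun _ => (1 : ℝ)) (T (fun i => (a i : ℤ)) x) ≤ Z.card := by
        simp only [indicator_apply, mem_preimage, mem_singleton_iff]
        rw [Finset.sum_boole]
        refine Nat.cast_le.2 (Finset.card_le_card_of_injOn (fun a i => (a i : ℤ)) ?_ ?_)
        · intro a ha
          refine Finset.mem_coe.2 (Finset.mem_filter.2 ⟨Fintype.mem_piFinset.2 fun i => ?_,
            (Finset.mem_filter.1 ha).2⟩)
          have := (a i).isLt
          rw [Finset.mem_Ico]
          constructor <;> lia
        · intro a _ a' _ h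
          funext i
          have := congrFun h i
          simp only at this
          exact Fin.ext (by lia)
      let good : (Fin k → ℤ) → Prop := fun v =>
        ∃ a : Fin k → Fin N, w (T (fun i => v i - (a i : ℤ)) x) = 1
      have h1 : ((Z.filter fun v => ¬ good v).card : ℝ) ≤ η * (L : ℝ) ^ k := by
        refine hbad L hLL₀ x _ (fun v hv => hZbox v (Finset.mem_filter.1 hv).1) fun v hv a ha => ?_
        exact (Finset.mem_filter.1 hv).2 ⟨a, ha⟩
      let C : Finset (Fin k → ℤ) := (Fintype.piFinset fun _ => Finset.Ico (-(N : ℤ)) L).filter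
        fun c => w (T c x) = 1
      have hCN := card_tiles_mul hT hwsep L x C fun c hc => by
        obtain ⟨h2, h3⟩ := Finset.mem_filter.1 hc
        exact ⟨fun i => Finset.mem_Ico.1 (Fintype.mem_piFinset.1 h2 i), by rw [h3]; exact one_pos⟩
      have hsub : (Z.filter good) ⊆ C.biUnion fun c =>
          (Finset.univ.filter fun a : Fin k → Fin N => Φ (T c x) a = 0).image
            fun a i => c i + (a i : ℤ) := by
        intro v hv
        obtain ⟨hvZ, a, ha⟩ := Finset.mem_filter.1 hv
        have hbox := hZbox v hvZ
        have hv0 := (Finset.mem_filter.1 hvZ).2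
        set c : Fin k → ℤ := fun i => v i - (a i : ℤ) with hc
        have hTc : T (neg a) (T v x) = T c x := by
          rw [← hT.map_add]
          congr 1
          funext i
          simp only [neg, hc, Pi.add_apply]
          ring
        have hgv := hg1 (T v x) a (by rw [hTc, ha]; exact one_pos)
        rw [hTc, ha, hv0] at hgv
        refine Finset.mem_biUnion.2 ⟨c, Finset.mem_filter.2 ⟨Fintype.mem_piFinset.2 fun i => ?_, ha⟩,
          Finset.mem_image.2 ⟨a, Finset.mem_filter.2 ⟨Finset.mem_univ _, by linarith⟩, ?_⟩⟩
        · have h2 := hbox i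
          have h3 := (a i).isLt
          rw [Finset.mem_Ico]
          simp only [hc]
          constructor <;> lia
        · funext i
          simp only [hc]
          ring
      have h2 : ((Z.filter good).card : ℝ) ≤ C.card * (η * (N : ℝ) ^ k) := by
        calc ((Z.filter good).card : ℝ) ≤ _ := Nat.cast_le.2 (Finset.card_le_card hsub)
          _ ≤ ((∑ c ∈ C, ((Finset.univ.filter fun a : Fin k → Fin N =>
              Φ (T c x) a = 0).image fun a i => c i + (a i : ℤ)).card : ℕ) : ℝ) :=
            Nat.cast_le.2 Finset.card_biUnion_le
          _ = ∑ c ∈ C, (((Finset.univ.filter fun a : Fin k → Fin N =>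
              Φ (T c x) a = 0).image fun a i => c i + (a i : ℤ)).card : ℝ) := by push_cast; rfl
          _ ≤ ∑ _c ∈ C, η * (N : ℝ) ^ k := by
            refine Finset.sum_le_sum fun c _ => le_trans (Nat.cast_le.2 Finset.card_image_le) ?_
            have h3 := hΦ0 (T c x)
            rwa [Set.ncard_eq_toFinset_card', Set.toFinset_ofPred] at h3
          _ = _ := by rw [Finset.sum_const, nsmul_eq_mul]
      have h3 : (Z.card : ℝ) = (Z.filter good).card + (Z.filter fun v => ¬ good v).card := by
        exact_mod_cast (Finset.card_filter_add_card_filter_not good).symm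
      have h4 : (C.card : ℝ) * (η * (N : ℝ) ^ k) ≤ η * ((1 + 1) * (L : ℝ) ^ k) := by
        calc (C.card : ℝ) * (η * (N : ℝ) ^ k) = η * (C.card * (N : ℝ) ^ k) := by ring
          _ ≤ η * ((1 + 1) * (L : ℝ) ^ k) :=
            mul_le_mul_of_nonneg_left (hCN.trans hgrow) hη0.le
      linarith
    have hbdd : BddBelow (range fun N : {N : ℕ // 1 ≤ N} =>
        (⨆ x : X, ∑ a : Fin k → Fin N.1,
          (g ⁻¹' {0}).indicator (fun _ => (1 : ℝ)) (T (fun i => (a i : ℤ)) x)) / (N.1 : ℝ) ^ k) := by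
      refine ⟨0, ?_⟩
      rintro _ ⟨n, rfl⟩
      refine div_nonneg (Real.iSup_nonneg fun x => Finset.sum_nonneg fun a _ => ?_) (by positivity)
      exact indicator_nonneg (fun _ _ => zero_le_one) _
    calc ocap T (g ⁻¹' {0}) ≤ _ := ciInf_le hbdd ⟨L, hL1⟩
      _ ≤ 3 * η := by
        rw [div_le_iff₀ hLpos]
        exact Real.iSup_le hsum (by positivity)
      _ < δ := by rw [hη]; linarith
end

section
/- Let n ≥ 1 and let P be a finite simplicial complex. Then almost every linear map f: P → ℝ^n satisfies: for every x ∈ P, the number of indices 1 ≤ i ≤ n with f(x)_i = 0 is at most dim P. Here 'almost every linear map' refers to Lebesgue measure on the parameter space (ℝ^n)^{V(P)}. -/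
open Set MeasureTheory

/-!
The key point is that, for almost every `u`, every square minor `(u v (e v'))` with rows indexed by
a finset `s` of vertices and columns by an injection `e : s ↪ Fin n` is nonzero
(`ae_minor_ne_zero`). Indeed, translating `u` by `t • D`, where `D` is the partial permutation
matrix of `e`, adds `t • 1` to the minor, so along each line of direction `D` the determinant is a
characteristic polynomial in `t` and vanishes finitely often; a Fubini argument for Haar measure
then shows that the zero set of the minor is null.

If all these minors are nonzero, and a point with weights `w` supported on a face `s` had at least
`#s` vanishing coordinates, then `w` restricted to `s` would be a nonzero vector in the left kernel
of an invertible minor with columns among the vanishing coordinates.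
-/

/-- A square minor of a matrix `u`, with rows in `s` and columns picked by an injection `e`,
is nonzero for almost every `u`. -/
theorem ae_minor_ne_zero {n : ℕ} {V : Type} [Fintype V] [DecidableEq V]
    (s : Finset V) (e : s ↪ Fin n) :
    ∀ᵐ u ∂(volume : Measure (V → Fin n → ℝ)),
      (Matrix.of fun a b : s => u a (e b)).det ≠ 0 := by
  -- the partial permutation matrix of `e`
  let D : V → Fin n → ℝ := fun v i => if ∃ a : s, (a : V) = v ∧ e a = i then 1 else 0
  have hD : ∀ a b : s, D a (e b) = (1 : Matrix s s ℝ) a b := by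
    intro a b
    simp only [D, Matrix.one_apply]
    congr 1
    simp only [eq_iff_iff]
    constructor
    · rintro ⟨c, hc, hcb⟩
      rw [← Subtype.ext hc, e.injective hcb]
    · rintro rfl
      exact ⟨a, rfl, rfl⟩
  have hcont : Continuous fun u : V → Fin n → ℝ =>
      (Matrix.of fun a b : s => u a (e b)).det := by
    apply Continuous.matrix_det
    exact continuous_matrix fun a b => by simp only [Matrix.of_apply]; fun_prop
  refine ae_mem_of_ae_add_linearMap_mem (LinearMap.toSpanSingleton ℝ (V → Fin n → ℝ) D)
    (volume : Measure ℝ) volume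
    (s := {u | (Matrix.of fun a b : s => u a (e b)).det ≠ 0})
    (hcont.measurable (measurableSet_singleton 0).compl) fun u => ?_
  have key : ∀ t : ℝ, (Matrix.of fun a b : s => (u + t • D) a (e b)).det =
      (-(Matrix.of fun a b : s => u a (e b))).charpoly.eval t := by
    intro t
    rw [Matrix.eval_charpoly]
    congr 1
    ext a b
    simp [hD, Matrix.one_apply, Matrix.diagonal_apply, add_comm]
  have hfin : {t : ℝ | (-(Matrix.of fun a b : s => u a (e b))).charpoly.IsRoot t}.Finite :=
    Polynomial.finite_setOfPred_isRoot (Matrix.charpoly_monic _).ne_zero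
  filter_upwards [hfin.countable.ae_notMem volume] with t ht
  exact fun h => ht ((key t).symm.trans h)

/-- **Lemma.** Let `P` be a finite simplicial complex (given abstractly by a
downward-closed family `faces` of nonempty finite subsets of a finite vertex
set `V`). For almost every choice of vertex images `u : V → ℝ^n` (Lebesgue
measure on `(ℝ^n)^V`), the induced linear map
`w ↦ Σ_v w(v)·u(v)` on the geometric realization satisfies: for every point,
the number of coordinates `i` with value `0` is at most `dim P`. -/
theorem stmt_14 (n : ℕ) (hn : 1 ≤ n)
    (V : Type) [Fintype V] [DecidableEq V]
    (faces : Finset (Finset V))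
    (hnonempty : ∀ s ∈ faces, s.Nonempty)
    (hdown : ∀ s ∈ faces, ∀ t ⊆ s, t.Nonempty → t ∈ faces) :
    ∀ᵐ u ∂(volume : Measure (V → Fin n → ℝ)),
      ∀ w : V → ℝ, (∀ v, 0 ≤ w v) → (∑ v, w v) = 1 →
        (∃ s ∈ faces, ∀ v, w v ≠ 0 → v ∈ s) →
        {i : Fin n | (∑ v, w v • u v) i = 0}.ncard ≤ faces.sup Finset.card - 1 := by
  have hae : ∀ᵐ u ∂(volume : Measure (V → Fin n → ℝ)), ∀ s : Finset V, ∀ e : s ↪ Fin n,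
      (Matrix.of fun a b : s => u a (e b)).det ≠ 0 :=
    ae_all_iff.2 fun s => ae_all_iff.2 fun e => ae_minor_ne_zero s e
  filter_upwards [hae] with u hu w _ hw1 ⟨s, hs, hws⟩
  have hsup : s.card ≤ faces.sup Finset.card := Finset.le_sup (f := Finset.card) hs
  by_contra! hlt
  have hle : s.card ≤ {i : Fin n | (∑ v, w v • u v) i = 0}.ncard := by omega
  obtain ⟨g⟩ : Nonempty (s ↪ {i : Fin n | (∑ v, w v • u v) i = 0}) := by
    classical
    apply Function.Embedding.nonempty_of_card_le
    rwa [Fintype.card_coe, ← Nat.card_eq_fintype_card, Nat.card_coe_set_eq]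
  have hker : Matrix.vecMul (fun a : s => w a)
      (Matrix.of fun a b : s => u a ((g.trans (Function.Embedding.subtype _)) b)) = 0 := by
    ext b
    have hb : (∑ v, w v • u v) (g b) = 0 := (g b).2
    rw [Finset.sum_apply] at hb
    simp only [Matrix.vecMul, dotProduct, Matrix.of_apply, Function.Embedding.trans_apply,
      Function.Embedding.subtype_apply, Pi.zero_apply]
    rw [Finset.sum_coe_sort s fun v => w v * u v (g b)]
    refine (Finset.sum_subset (Finset.subset_univ s) fun v _ hv => ?_).trans hb
    have : w v = 0 := by_contra fun h => hv (hws v h)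
    simp [this]
  have hzero := Matrix.eq_zero_of_vecMul_eq_zero (hu s _) hker
  have hw0 : ∀ v, w v = 0 := fun v =>
    by_contra fun h => h (congrFun hzero ⟨v, hws v h⟩)
  simp [hw0] at hw1
end
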